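/- arXiv:1110.1713 — 2 statements merged into one kernel-verified Lean document; each statement's English description precedes it below -/
import Mathlib

section
/- There exists a constant κ > 0 such that for every atom A, the heat maximal function MA satisfies ‖MA‖₁ ≤ κ. -/
open MeasureTheory Real Filter Set
open scoped ENNReal

noncomputable section

/-- The group `G = ℝ² ⋊ ℝ⁺`, realized as triples `(x₁, x₂, a)` (only `a > 0` is relevant). -/
abbrev G : Type := ℝ × ℝ × ℝ

/-- Group product `(x₁,x₂,a)·(x₁',x₂',a') = (x₁+a x₁', x₂+a x₂', a a')`. -/
def gMul (x y : G) : G := (x.1 + x.2.2 * y.1, x.2.1 + x.2.2 * y.2.1, x.2.2 * y.2.2)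

/-- Group inverse `(x₁,x₂,a)⁻¹ = (−x₁/a, −x₂/a, 1/a)`. -/
def gInv (x : G) : G := (-x.1 / x.2.2, -x.2.1 / x.2.2, 1 / x.2.2)

/-- The identity `e = (0,0,1)`. -/
def gE : G := (0, 0, 1)

/-- The right Haar measure `dρ = a⁻¹ dx₁ dx₂ da` (supported where `a > 0`). -/
def ρG : Measure G :=
  (volume : Measure G).withDensity fun x => ENNReal.ofReal (if 0 < x.2.2 then x.2.2⁻¹ else 0)

/-- The modular function `δ(x₁,x₂,a) = a⁻²`. -/
def deltaG (x : G) : ℝ := (x.2.2 ^ 2)⁻¹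

/-- `|x| = √(x₁² + x₂²)`. -/
def normG (x : G) : ℝ := Real.sqrt (x.1 ^ 2 + x.2.1 ^ 2)

/-- `cosh r(x) = (a + a⁻¹ + a⁻¹|x|²)/2`. -/
def coshArg (x : G) : ℝ := (x.2.2 + x.2.2⁻¹ + x.2.2⁻¹ * (x.1 ^ 2 + x.2.1 ^ 2)) / 2

/-- `r(x) ≥ 0` is determined by `cosh r(x) = coshArg x`; explicitly `r = arcosh (coshArg x)`. -/
def rG (x : G) : ℝ := Real.log (coshArg x + Real.sqrt (coshArg x ^ 2 - 1))

/-- The left-invariant distance `d(x,y) = r(x⁻¹y)`. -/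
def dG (x y : G) : ℝ := rG (gMul (gInv x) y)

/-- The heat kernel
`p_t(x) = (8π^{3/2})⁻¹ δ(x)^{1/2} (r(x)/sinh r(x)) t^{−3/2} exp(−r(x)²/(4t))`,
with `r/sinh r := 1` at `x = e`. -/
def heatK (t : ℝ) (x : G) : ℝ :=
  (8 * Real.pi ^ ((3 : ℝ)/2))⁻¹ * Real.sqrt (deltaG x) *
    (if rG x = 0 then 1 else rG x / Real.sinh (rG x)) *
    t ^ (-(3 : ℝ)/2) * Real.exp (-(rG x ^ 2) / (4 * t))

/-- Convolution `f ∗ p_t(x) = ∫ f(xy⁻¹) p_t(y) dρ(y)`. -/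
def convHeat (f : G → ℝ) (t : ℝ) (x : G) : ℝ := ∫ y, f (gMul x (gInv y)) * heatK t y ∂ρG

/-- The heat maximal operator `Mf(x) = sup_{t>0} |f ∗ p_t(x)|` (valued in `ℝ≥0∞`). -/
def maxHeat (f : G → ℝ) (x : G) : ℝ≥0∞ :=
  ⨆ (t : ℝ) (_ : 0 < t), ENNReal.ofReal |convHeat f t x|

/-- Calderón–Zygmund sets. -/
def IsCZ (R : Set G) : Prop :=
  ∃ c : G, ∃ L r : ℝ, 0 < c.2.2 ∧ 0 < L ∧ 0 < r ∧
    R = Set.Icc (c.1 - L/2) (c.1 + L/2) ×ˢ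
        (Set.Icc (c.2.1 - L/2) (c.2.1 + L/2) ×ˢ
         Set.Icc (c.2.2 * Real.exp (-r)) (c.2.2 * Real.exp r)) ∧
    (r < 1 → Real.exp 2 * c.2.2 * r ≤ L ∧ L < Real.exp 8 * c.2.2 * r) ∧
    (1 ≤ r → c.2.2 * Real.exp (2*r) ≤ L ∧ L < c.2.2 * Real.exp (8*r))

/-- Atoms: `A ∈ L¹(ρ)` supported in a Calderón–Zygmund set `R`, with
`‖A‖_∞ ≤ ρ(R)⁻¹` and `∫ A dρ = 0`. -/
def IsAtomG (A : G → ℝ) : Prop :=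
  Integrable A ρG ∧
  ∃ R : Set G, IsCZ R ∧ (∀ x ∉ R, A x = 0) ∧
    eLpNorm A ⊤ ρG ≤ (ρG R)⁻¹ ∧
    ∫ x, A x ∂ρG = 0

/-- `f = Σ_j lam_j A_j` with atoms `A_j`, `Σ_j |lam_j| < ∞`, converging in `L¹(ρ)`. -/
def IsH1Decomp (f : G → ℝ) (lam : ℕ → ℝ) (A : ℕ → G → ℝ) : Prop :=
  (∀ j, IsAtomG (A j)) ∧ Summable (fun j => |lam j|) ∧
  Tendsto (fun N => eLpNorm (fun x => f x - ∑ j ∈ Finset.range N, lam j * A j x) 1 ρG)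
    atTop (nhds 0)

/-- The Hardy space `H¹`. -/
def MemH1 (f : G → ℝ) : Prop :=
  Integrable f ρG ∧ ∃ lam A, IsH1Decomp f lam A

/-- `‖f‖_{H¹} = inf Σ_j |lam_j|` over all atomic decompositions. -/
def H1norm (f : G → ℝ) : ℝ :=
  sInf {s | ∃ lam A, IsH1Decomp f lam A ∧ s = ∑' j, |lam j|}

/-- The left-invariant vector field `X₀ = a ∂_a`. -/
def X0 (f : G → ℝ) (x : G) : ℝ := x.2.2 * deriv (fun s => f (x.1, x.2.1, s)) x.2.2

/-- The left-invariant vector field `X₁ = a ∂_{x₁}`. -/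
def X1 (f : G → ℝ) (x : G) : ℝ := x.2.2 * deriv (fun s => f (s, x.2.1, x.2.2)) x.1

/-- The left-invariant vector field `X₂ = a ∂_{x₂}`. -/
def X2 (f : G → ℝ) (x : G) : ℝ := x.2.2 * deriv (fun s => f (x.1, s, x.2.2)) x.2.1

/-- `‖∇p_t(x)‖`, the Euclidean norm of `(X₀p_t, X₁p_t, X₂p_t)` at `x`. -/
def gradHeatNorm (t : ℝ) (x : G) : ℝ :=
  Real.sqrt (X0 (heatK t) x ^ 2 + X1 (heatK t) x ^ 2 + X2 (heatK t) x ^ 2)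

/-- The Poisson kernel `q_t(x) = π⁻² δ(x)^{1/2} (r(x)/sinh r(x)) · t/(t²+r(x)²)²`. -/
def poissonK (t : ℝ) (x : G) : ℝ :=
  (Real.pi ^ 2)⁻¹ * Real.sqrt (deltaG x) *
    (if rG x = 0 then 1 else rG x / Real.sinh (rG x)) *
    (t / (t ^ 2 + rG x ^ 2) ^ 2)

/-- Convolution `f ∗ q_t(x) = ∫ f(xy⁻¹) q_t(y) dρ(y)`. -/
def convPoisson (f : G → ℝ) (t : ℝ) (x : G) : ℝ := ∫ y, f (gMul x (gInv y)) * poissonK t y ∂ρG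

/-- The Poisson maximal operator `M̃f(x) = sup_{t>0} |f ∗ q_t(x)|`. -/
def maxPoisson (f : G → ℝ) (x : G) : ℝ≥0∞ :=
  ⨆ (t : ℝ) (_ : 0 < t), ENNReal.ofReal |convPoisson f t x|

/-- `G_{r₁}(x) = sup_{z ∈ B(x,r₁/2)} sup_{t>0} ‖∇p_t(z)‖`. -/
def Gsup (r1 : ℝ) (x : G) : ℝ≥0∞ :=
  ⨆ (z : G) (_ : 0 < z.2.2 ∧ dG x z < r1 / 2) (t : ℝ) (_ : 0 < t),
    ENNReal.ofReal (gradHeatNorm t z)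

/-- `R₀ = [−1,1]×[−1,1]×[e⁻¹,e]`. -/
def R0set : Set G :=
  Set.Icc (-1 : ℝ) 1 ×ˢ (Set.Icc (-1 : ℝ) 1 ×ˢ Set.Icc (Real.exp (-1)) (Real.exp 1))

/-- `R_L = [L−1,L+1]×[−1,1]×[e⁻¹,e]`. -/
def RLset (L : ℝ) : Set G :=
  Set.Icc (L - 1) (L + 1) ×ˢ (Set.Icc (-1 : ℝ) 1 ×ˢ Set.Icc (Real.exp (-1)) (Real.exp 1))

/-- `f_L = χ_{R_L} − χ_{R₀}`. -/
def fL (L : ℝ) : G → ℝ := fun x =>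
  (RLset L).indicator (fun _ => (1 : ℝ)) x - R0set.indicator (fun _ => (1 : ℝ)) x

/-- The mean of `g` over `R` with respect to `ρ`. -/
def czMean (g : G → ℝ) (R : Set G) : ℝ := (∫ x in R, g x ∂ρG) / (ρG R).toReal

/-- `‖g‖_{BMO} = sup_R ρ(R)⁻¹ ∫_R |g − g_R| dρ` over Calderón–Zygmund sets `R`. -/
def czBMO (g : G → ℝ) : ℝ≥0∞ :=
  ⨆ (R : Set G) (_ : IsCZ R),
    (ρG R)⁻¹ * ∫⁻ x in R, ENNReal.ofReal |g x - czMean g R| ∂ρG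

/-- `‖h‖_{BMO(ℝ)} = sup_Q |Q|⁻¹ ∫_Q |h − h_Q|` over bounded intervals `Q ⊂ ℝ`. -/
def lineBMO (h : ℝ → ℝ) : ℝ≥0∞ :=
  ⨆ (a : ℝ) (b : ℝ) (_ : a < b),
    (ENNReal.ofReal (b - a))⁻¹ *
      ∫⁻ s in Set.Icc a b, ENNReal.ofReal |h s - (∫ u in Set.Icc a b, h u) / (b - a)|

/-- `2R₀ = [−2,2]×[−2,2]×[e⁻²,e²]`. -/
def twoR0set : Set G :=
  Set.Icc (-2 : ℝ) 2 ×ˢ (Set.Icc (-2 : ℝ) 2 ×ˢ Set.Icc (Real.exp (-2)) (Real.exp 2))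

/-- The set `{x₁ > 3, |x₂| < 1, e⁻¹ < a < e}`. -/
def domSpecial : Set G :=
  {x : G | 3 < x.1 ∧ |x.2.1| < 1 ∧ Real.exp (-1) < x.2.2 ∧ x.2.2 < Real.exp 1}

/-- The function equal to `1/(x₁ (log x₁)^{3/2})` on `{x₁ > 3, |x₂| < 1, e⁻¹ < a < e}`,
to `c₀` on `R₀`, and `0` elsewhere. -/
def fSpecial (c0 : ℝ) : G → ℝ := fun x =>
  domSpecial.indicator (fun y => (y.1 * Real.log y.1 ^ ((3 : ℝ)/2))⁻¹) x
    + R0set.indicator (fun _ => c0) x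

def ch (x w : G) : ℝ :=
  (x.2.2 ^ 2 + w.2.2 ^ 2 + ((x.1 - w.1) ^ 2 + (x.2.1 - w.2.1) ^ 2)) / (2 * x.2.2 * w.2.2)

def hd (x w : G) : ℝ := Real.arcosh (ch x w)

def Ee (x w : G) : ℝ := (x.2.2 * w.2.2)⁻¹

lemma ch_comm (x w : G) : ch x w = ch w x := by
  unfold ch; congr 1 <;> ring

lemma hd_comm (x w : G) : hd x w = hd w x := by unfold hd; rw [ch_comm]

lemma Ee_comm (x w : G) : Ee x w = Ee w x := by unfold Ee; rw [mul_comm]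

lemma one_le_ch {x w : G} (hx : 0 < x.2.2) (hw : 0 < w.2.2) : 1 ≤ ch x w := by
  unfold ch
  rw [le_div_iff₀ (by positivity)]
  nlinarith [sq_nonneg (x.2.2 - w.2.2), sq_nonneg (x.1 - w.1), sq_nonneg (x.2.1 - w.2.1)]

lemma hd_nonneg {x w : G} (hx : 0 < x.2.2) (hw : 0 < w.2.2) : 0 ≤ hd x w :=
  Real.arcosh_nonneg (one_le_ch hx hw)

lemma cosh_hd {x w : G} (hx : 0 < x.2.2) (hw : 0 < w.2.2) : Real.cosh (hd x w) = ch x w :=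
  Real.cosh_arcosh (one_le_ch hx hw)

lemma sinh_hd {x w : G} (hx : 0 < x.2.2) (hw : 0 < w.2.2) :
    Real.sinh (hd x w) = √(ch x w ^ 2 - 1) :=
  Real.sinh_arcosh (one_le_ch hx hw)

lemma sinh_hd_sq {x w : G} (hx : 0 < x.2.2) (hw : 0 < w.2.2) :
    Real.sinh (hd x w) ^ 2 = ch x w ^ 2 - 1 := by
  rw [← cosh_hd hx hw, Real.cosh_sq]; ring

lemma sinh_hd_nonneg {x w : G} (hx : 0 < x.2.2) (hw : 0 < w.2.2) : 0 ≤ Real.sinh (hd x w) :=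
  Real.sinh_nonneg_iff.2 (hd_nonneg hx hw)

lemma hd_eq_zero {x w : G} (hx : 0 < x.2.2) (hw : 0 < w.2.2) (h : hd x w = 0) : w = x := by
  have h1 : ch x w = 1 := (Real.arcosh_eq_zero_iff (one_le_ch hx hw)).1 h
  unfold ch at h1
  rw [div_eq_iff (by positivity)] at h1
  have h2 : (x.2.2 - w.2.2) ^ 2 + (x.1 - w.1) ^ 2 + (x.2.1 - w.2.1) ^ 2 = 0 := by linarith
  have a1 : x.2.2 - w.2.2 = 0 := by
    apply pow_eq_zero_iff (two_ne_zero) |>.1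
    nlinarith [sq_nonneg (x.2.2 - w.2.2), sq_nonneg (x.1 - w.1), sq_nonneg (x.2.1 - w.2.1)]
  have a2 : x.1 - w.1 = 0 := by
    apply pow_eq_zero_iff (two_ne_zero) |>.1
    nlinarith [sq_nonneg (x.2.2 - w.2.2), sq_nonneg (x.1 - w.1), sq_nonneg (x.2.1 - w.2.1)]
  have a3 : x.2.1 - w.2.1 = 0 := by
    apply pow_eq_zero_iff (two_ne_zero) |>.1
    nlinarith [sq_nonneg (x.2.2 - w.2.2), sq_nonneg (x.1 - w.1), sq_nonneg (x.2.1 - w.2.1)]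
  ext <;> linarith

lemma hd_le_of_ch_le {x w : G} {v : ℝ} (hx : 0 < x.2.2) (hw : 0 < w.2.2) (hv : 0 ≤ v)
    (h : ch x w ≤ Real.cosh v) : hd x w ≤ v := by
  rw [← cosh_hd hx hw, Real.cosh_le_cosh, abs_of_nonneg (hd_nonneg hx hw), abs_of_nonneg hv] at h
  exact h

lemma le_hd_of_le_ch {x w : G} {v : ℝ} (hx : 0 < x.2.2) (hw : 0 < w.2.2) (hv : 0 ≤ v)
    (h : Real.cosh v ≤ ch x w) : v ≤ hd x w := by
  rw [← cosh_hd hx hw, Real.cosh_le_cosh, abs_of_nonneg (hd_nonneg hx hw), abs_of_nonneg hv] at h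
  exact h

/-- vertical move -/
lemma hd_vert {x w : G} (hx : 0 < x.2.2) (hw : 0 < w.2.2) (u : ℝ) :
    hd x (w.1, w.2.1, w.2.2 * Real.exp u) ≤ hd x w + |u| := by
  have hd0 := hd_nonneg hx hw
  have hs0 := sinh_hd_nonneg hx hw
  have hsq := sinh_hd_sq hx hw
  apply hd_le_of_ch_le hx (by dsimp only; positivity) (by positivity)
  rw [Real.cosh_add, cosh_hd hx hw, Real.cosh_abs]
  set P : ℝ := (x.2.2 ^ 2 + ((x.1 - w.1) ^ 2 + (x.2.1 - w.2.1) ^ 2)) / (2 * x.2.2 * w.2.2) with hP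
  set Q : ℝ := w.2.2 / (2 * x.2.2) with hQ
  have e1 : ch x w = P + Q := by
    rw [hP, hQ]; unfold ch; field_simp; ring
  have e2 : ch x (w.1, w.2.1, w.2.2 * Real.exp u) = P * Real.exp (-u) + Q * Real.exp u := by
    rw [hP, hQ, Real.exp_neg]; unfold ch; field_simp; ring
  have hPQ : 1 ≤ 4 * P * Q := by
    have : 4 * P * Q = (x.2.2 ^ 2 + ((x.1 - w.1) ^ 2 + (x.2.1 - w.2.1) ^ 2)) / x.2.2 ^ 2 := by
      rw [hP, hQ]; field_simp; try ring
    rw [this, le_div_iff₀ (by positivity)]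
    nlinarith [sq_nonneg (x.1 - w.1), sq_nonneg (x.2.1 - w.2.1)]
  have hle : |Q - P| ≤ Real.sinh (hd x w) := by
    apply abs_le_of_sq_le_sq _ hs0
    rw [hsq, e1]; nlinarith
  have e3 : P * Real.exp (-u) + Q * Real.exp u
      = (P + Q) * Real.cosh u + (Q - P) * Real.sinh u := by
    rw [Real.cosh_eq, Real.sinh_eq]; ring
  have e4 : |Real.sinh u| = Real.sinh |u| := Real.abs_sinh u
  rw [e2, e3, e1]
  have : (Q - P) * Real.sinh u ≤ Real.sinh (hd x w) * Real.sinh |u| := by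
    calc (Q - P) * Real.sinh u ≤ |(Q - P) * Real.sinh u| := le_abs_self _
      _ = |Q - P| * Real.sinh |u| := by rw [abs_mul, e4]
      _ ≤ _ := by
        apply mul_le_mul_of_nonneg_right hle
        exact Real.sinh_nonneg_iff.2 (abs_nonneg u)
  linarith

lemma horiz_le {x w : G} (hx : 0 < x.2.2) (hw : 0 < w.2.2) :
    |x.1 - w.1| / x.2.2 ≤ Real.sinh (hd x w) ∧ |x.2.1 - w.2.1| / x.2.2 ≤ Real.sinh (hd x w) := by
  have hs0 := sinh_hd_nonneg hx hw
  have hsq := sinh_hd_sq hx hw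
  have key : ((x.1 - w.1) ^ 2 + (x.2.1 - w.2.1) ^ 2) / x.2.2 ^ 2 ≤ ch x w ^ 2 - 1 := by
    have : ch x w ^ 2 - 1 - ((x.1 - w.1) ^ 2 + (x.2.1 - w.2.1) ^ 2) / x.2.2 ^ 2
      = ((x.2.2 ^ 2 + ((x.1 - w.1) ^ 2 + (x.2.1 - w.2.1) ^ 2) - w.2.2 ^ 2)
          / (2 * x.2.2 * w.2.2)) ^ 2 := by
      unfold ch; field_simp; ring
    nlinarith [sq_nonneg ((x.2.2 ^ 2 + ((x.1 - w.1) ^ 2 + (x.2.1 - w.2.1) ^ 2) - w.2.2 ^ 2)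
          / (2 * x.2.2 * w.2.2))]
  constructor
  · apply abs_le_of_sq_le_sq' _ hs0 |>.2
    rw [hsq, div_pow, sq_abs]
    refine le_trans ?_ key
    gcongr; nlinarith [sq_nonneg (x.2.1 - w.2.1)]
  · apply abs_le_of_sq_le_sq' _ hs0 |>.2
    rw [hsq, div_pow, sq_abs]
    refine le_trans ?_ key
    gcongr; nlinarith [sq_nonneg (x.1 - w.1)]

lemma cosh_two_ge (η : ℝ) : 1 + 2 * η ^ 2 ≤ Real.cosh (2 * |η|) := by
  have := Real.cosh_sq |η|
  rw [Real.cosh_two_mul, this]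
  have h2 : |η| ≤ Real.sinh |η| := Real.self_le_sinh_iff.2 (abs_nonneg η)
  nlinarith [sq_abs η, abs_nonneg η]

lemma hd_horiz_aux {x w w' : G} (hx : 0 < x.2.2) (hw : 0 < w.2.2) (hw' : 0 < w'.2.2) (η s : ℝ)
    (hs : |s| / x.2.2 ≤ Real.sinh (hd x w))
    (h : ch x w' = ch x w - η * s / x.2.2 + η ^ 2 * (w.2.2 / (2 * x.2.2))) :
    hd x w' ≤ hd x w + 2 * |η| := by
  have hd0 := hd_nonneg hx hw
  have hs0 := sinh_hd_nonneg hx hw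
  apply hd_le_of_ch_le hx hw' (by positivity)
  rw [Real.cosh_add, cosh_hd hx hw, h]
  have h1 := cosh_two_ge η
  have h2 : |η| ≤ Real.sinh (2 * |η|) := by
    have : 2 * |η| ≤ Real.sinh (2 * |η|) := Real.self_le_sinh_iff.2 (by positivity)
    linarith [abs_nonneg η]
  have h3 : w.2.2 / (2 * x.2.2) ≤ ch x w := by
    unfold ch
    rw [div_le_div_iff₀ (by positivity) (by positivity)]
    nlinarith [mul_pos hx hw, mul_nonneg hx.le (sq_nonneg (x.1 - w.1)),
      mul_nonneg hx.le (sq_nonneg (x.2.1 - w.2.1)), mul_nonneg hx.le (sq_nonneg x.2.2)]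
  have h4 : - (η * s / x.2.2) ≤ Real.sinh (hd x w) * Real.sinh (2 * |η|) := by
    calc - (η * s / x.2.2) ≤ |η * s / x.2.2| := neg_le_abs _
      _ = (|s| / x.2.2) * |η| := by rw [abs_div, abs_mul, abs_of_pos hx]; ring
      _ ≤ _ := by gcongr
  have h5 := one_le_ch hx hw
  nlinarith [sq_nonneg η, mul_le_mul_of_nonneg_left h3 (sq_nonneg η)]

lemma hd_horiz1 {x w : G} (hx : 0 < x.2.2) (hw : 0 < w.2.2) (η : ℝ) :
    hd x (w.1 + η * w.2.2, w.2.1, w.2.2) ≤ hd x w + 2 * |η| := by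
  refine hd_horiz_aux (w := w) hx hw (by simpa using hw) η (x.1 - w.1) (horiz_le hx hw).1 ?_
  unfold ch; field_simp; ring

lemma hd_horiz2 {x w : G} (hx : 0 < x.2.2) (hw : 0 < w.2.2) (η : ℝ) :
    hd x (w.1, w.2.1 + η * w.2.2, w.2.2) ≤ hd x w + 2 * |η| := by
  refine hd_horiz_aux (w := w) hx hw (by simpa using hw) η (x.2.1 - w.2.1) (horiz_le hx hw).2 ?_
  unfold ch; field_simp; ring

lemma measurable_arcosh' : Measurable Real.arcosh := by
  unfold Real.arcosh
  fun_prop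

lemma measurable_hd' {Y : Type*} [MeasurableSpace Y] {f g : Y → G} (hf : Measurable f)
    (hg : Measurable g) : Measurable fun y => hd (f y) (g y) := by
  unfold hd ch
  exact measurable_arcosh'.comp (by fun_prop)

lemma measurable_Ee' {Y : Type*} [MeasurableSpace Y] {f g : Y → G} (hf : Measurable f)
    (hg : Measurable g) : Measurable fun y => Ee (f y) (g y) := by
  unfold Ee
  fun_prop

lemma lintegral_rho {F : G → ℝ≥0∞} (hF : Measurable F) :
    ∫⁻ x, F x ∂ρG = ∫⁻ a in Ioi (0:ℝ), ENNReal.ofReal a⁻¹ * ∫⁻ q : ℝ × ℝ, F (q.1, q.2, a) := by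
  have hm : Measurable (fun x : G => ENNReal.ofReal (if 0 < x.2.2 then x.2.2⁻¹ else 0)) := by
    apply ENNReal.measurable_ofReal.comp
    apply Measurable.ite
    · exact measurableSet_lt measurable_const (by fun_prop)
    · fun_prop
    · fun_prop
  unfold ρG
  rw [lintegral_withDensity_eq_lintegral_mul _ hm hF]
  rw [← (volume_preserving_prodAssoc (α₁ := ℝ) (β₁ := ℝ) (γ₁ := ℝ)).lintegral_comp (hm.mul hF)]
  rw [Measure.volume_eq_prod, lintegral_prod_symm]
  · rw [← lintegral_indicator measurableSet_Ioi]
    apply lintegral_congr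
    intro a
    by_cases ha : 0 < a
    · rw [indicator_of_mem (show a ∈ Ioi 0 from ha), ← lintegral_const_mul _ (by fun_prop)]
      simp [ha, MeasurableEquiv.prodAssoc]
    · rw [indicator_of_notMem (by simpa using ha)]
      simp [ha, MeasurableEquiv.prodAssoc]
  · exact ((hm.mul hF).comp MeasurableEquiv.prodAssoc.measurable).aemeasurable

lemma lintegral_radial {g : ℝ → ℝ≥0∞} (hg : Measurable g) (p1 p2 : ℝ) :
    ∫⁻ q : ℝ × ℝ, g ((q.1 - p1) ^ 2 + (q.2 - p2) ^ 2)
      = ENNReal.ofReal (2 * π) * ∫⁻ s in Ioi (0:ℝ), ENNReal.ofReal s * g (s ^ 2) := by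
  have h1 := lintegral_sub_right_eq_self (μ := (volume : Measure (ℝ × ℝ)))
    (fun q : ℝ × ℝ => g (q.1 ^ 2 + q.2 ^ 2)) (p1, p2)
  simp only [Prod.fst_sub, Prod.snd_sub] at h1
  rw [h1, ← lintegral_comp_polarCoord_symm, polarCoord_target, Measure.volume_eq_prod,
    ← Measure.prod_restrict, lintegral_prod]
  · have : ∀ x y : ℝ, ENNReal.ofReal x • g ((polarCoord.symm (x, y)).1 ^ 2
        + (polarCoord.symm (x, y)).2 ^ 2) = ENNReal.ofReal x * g (x ^ 2) := by
      intro x y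
      rw [polarCoord_symm_apply, smul_eq_mul]
      congr 2
      dsimp only
      have := Real.cos_sq_add_sin_sq y
      calc _ = x ^ 2 * (Real.cos y ^ 2 + Real.sin y ^ 2) := by ring
        _ = _ := by rw [this, mul_one]
    simp only [this]
    simp only [lintegral_const, Measure.restrict_apply MeasurableSet.univ, univ_inter,
      Real.volume_Ioo]
    rw [lintegral_mul_const _ (by fun_prop), mul_comm]
    congr 2; ring
  · apply Measurable.aemeasurable
    have hc : Continuous polarCoord.symm := continuous_polarCoord_symm
    have := hc.measurable
    simp only [smul_eq_mul]
    fun_prop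

lemma radial_cov {a e : ℝ} (ha : 0 < a) (he : 0 < e) (K : ℝ → ℝ≥0∞) :
    ∫⁻ s in Ioi (0:ℝ), ENNReal.ofReal s * (ENNReal.ofReal ((a * e)⁻¹ /
      Real.sinh (Real.arcosh ((a ^ 2 + e ^ 2 + s ^ 2) / (2 * a * e)))) *
        K (Real.arcosh ((a ^ 2 + e ^ 2 + s ^ 2) / (2 * a * e))))
      ≤ ∫⁻ d in Ioi |Real.log (e / a)|, K d := by
  set c : ℝ → ℝ := fun s => (a ^ 2 + e ^ 2 + s ^ 2) / (2 * a * e) with hc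
  have hc1 : ∀ s ∈ Ioi (0:ℝ), 1 < c s := by
    intro s hs
    have hs : 0 < s := hs
    simp only [hc]
    rw [lt_div_iff₀ (by positivity)]
    nlinarith [sq_nonneg (a - e), sq_pos_of_pos hs]
  have hmono : StrictMonoOn c (Ioi 0) := by
    intro s hs t ht hst
    have hs : 0 < s := hs
    simp only [hc]
    gcongr
  have hinj : InjOn (fun s => Real.arcosh (c s)) (Ioi 0) := by
    intro s hs t ht hst
    apply hmono.injOn hs ht
    exact Real.arcosh_injOn (hc1 s hs).le (hc1 t ht).le hst
  have hder : ∀ s ∈ Ioi (0:ℝ), HasDerivWithinAt (fun s => Real.arcosh (c s))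
      (s * ((a * e)⁻¹ / Real.sinh (Real.arcosh (c s)))) (Ioi 0) s := by
    intro s hs
    have h1 : HasDerivAt c (s / (a * e)) s := by
      have : HasDerivAt c (((2:ℕ) * s ^ (2 - 1)) / (2 * a * e)) s := by
        simpa using ((hasDerivAt_pow 2 s).const_add (a ^ 2 + e ^ 2)).div_const (2 * a * e)
      convert this using 1
      simp; field_simp
    have h2 := (Real.hasDerivAt_arcosh (hc1 s hs)).comp s h1
    rw [Real.sinh_arcosh (hc1 s hs).le]
    have h5 : s * ((a * e)⁻¹ / √(c s ^ 2 - 1)) = (√(c s ^ 2 - 1))⁻¹ * (s / (a * e)) := by ring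
    rw [h5]
    exact h2.hasDerivWithinAt
  have himg : (fun s => Real.arcosh (c s)) '' (Ioi 0) ⊆ Ioi |Real.log (e / a)| := by
    rintro _ ⟨s, hs, rfl⟩
    have h3 := hc1 s hs
    have hs : 0 < s := hs
    show |Real.log (e / a)| < Real.arcosh (c s)
    have h4 : Real.cosh (Real.log (e / a)) < Real.cosh (Real.arcosh (c s)) := by
      rw [Real.cosh_arcosh h3.le, Real.cosh_log (by positivity)]
      simp only [hc]
      have : (e / a + (e / a)⁻¹) / 2 = (a ^ 2 + e ^ 2) / (2 * a * e) := by field_simp; ring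
      rw [this]
      apply div_lt_div_of_pos_right _ (by positivity)
      nlinarith [sq_pos_of_pos hs]
    rw [Real.cosh_lt_cosh, abs_of_nonneg (Real.arcosh_nonneg h3.le)] at h4
    exact h4
  calc _ = ∫⁻ s in Ioi (0:ℝ), ENNReal.ofReal |s * ((a * e)⁻¹ / Real.sinh (Real.arcosh (c s)))|
        * K (Real.arcosh (c s)) := by
        apply setLIntegral_congr_fun measurableSet_Ioi
        intro s hs
        have hs' : 0 < s := hs
        have : 0 ≤ (a * e)⁻¹ / Real.sinh (Real.arcosh (c s)) := by
          have := Real.sinh_nonneg_iff.2 (Real.arcosh_nonneg (hc1 s hs).le)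
          positivity
        dsimp only
        rw [abs_of_nonneg (mul_nonneg hs'.le this), ENNReal.ofReal_mul hs'.le]
        exact (mul_assoc _ _ _).symm
    _ = ∫⁻ d in (fun s => Real.arcosh (c s)) '' (Ioi 0), K d :=
        (lintegral_image_eq_lintegral_abs_deriv_mul measurableSet_Ioi hder hinj K).symm
    _ ≤ _ := lintegral_mono_set himg

lemma log_cov {e : ℝ} (he : 0 < e) (K : ℝ → ℝ≥0∞) :
    ∫⁻ a in Ioi (0:ℝ), ENNReal.ofReal a⁻¹ * K (Real.log (e / a)) ≤ ∫⁻ b, K b := by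
  have hder : ∀ s ∈ Ioi (0:ℝ), HasDerivWithinAt (fun a => Real.log e - Real.log a)
      (-s⁻¹) (Ioi 0) s := by
    intro s hs
    exact ((Real.hasDerivAt_log (ne_of_gt hs)).const_sub _).hasDerivWithinAt
  have hinj : InjOn (fun a => Real.log e - Real.log a) (Ioi 0) := by
    intro s hs t ht hst
    apply Real.log_injOn_pos hs ht
    dsimp only at hst
    linarith
  calc _ = ∫⁻ a in Ioi (0:ℝ), ENNReal.ofReal |-a⁻¹| * K (Real.log e - Real.log a) := by
        apply setLIntegral_congr_fun measurableSet_Ioi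
        intro s hs
        have hs' : 0 < s := hs
        dsimp only
        rw [abs_neg, abs_of_pos (by positivity), Real.log_div he.ne' hs'.ne']
    _ = ∫⁻ b in (fun a => Real.log e - Real.log a) '' (Ioi 0), K b :=
        (lintegral_image_eq_lintegral_abs_deriv_mul measurableSet_Ioi hder hinj K).symm
    _ ≤ _ := setLIntegral_le_lintegral _ _

lemma polar (p : G) (hp : 0 < p.2.2) (H : ℝ → ℝ → ℝ≥0∞) (hH : Measurable (Function.uncurry H)) :
    ∫⁻ x, ENNReal.ofReal (Ee x p / Real.sinh (hd x p)) * H (hd x p) (Real.log (p.2.2 / x.2.2)) ∂ρG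
      ≤ ENNReal.ofReal (2 * π) * ∫⁻ d in Ioi (0:ℝ), ∫⁻ b in Ioo (-d) d, H d b := by
  have m1 : Measurable (fun x => hd x p) := measurable_hd' measurable_id measurable_const
  have m2 : Measurable (fun x => Ee x p) := measurable_Ee' measurable_id measurable_const
  have m3 : Measurable (fun x : G => H (hd x p) (Real.log (p.2.2 / x.2.2))) :=
    hH.comp (m1.prodMk (show Measurable (fun x : G => Real.log (p.2.2 / x.2.2)) by fun_prop))
  rw [lintegral_rho (by fun_prop)]
  calc _ ≤ ∫⁻ a in Ioi (0:ℝ), ENNReal.ofReal a⁻¹ * (ENNReal.ofReal (2 * π) *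
          ∫⁻ d in Ioi |Real.log (p.2.2 / a)|, H d (Real.log (p.2.2 / a))) := by
        apply setLIntegral_mono' measurableSet_Ioi
        intro a ha
        have ha : 0 < a := ha
        gcongr
        have hHb : Measurable (fun d => H d (Real.log (p.2.2 / a))) :=
          hH.comp (measurable_id.prodMk measurable_const)
        have := measurable_arcosh'
        have h1 := lintegral_radial (g := fun u => ENNReal.ofReal ((a * p.2.2)⁻¹ /
          Real.sinh (Real.arcosh ((a ^ 2 + p.2.2 ^ 2 + u) / (2 * a * p.2.2)))) *
          H (Real.arcosh ((a ^ 2 + p.2.2 ^ 2 + u) / (2 * a * p.2.2))) (Real.log (p.2.2 / a)))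
          (by
            have : Measurable fun u : ℝ => H (Real.arcosh ((a ^ 2 + p.2.2 ^ 2 + u) / (2 * a * p.2.2))) (Real.log (p.2.2 / a)) := hHb.comp (by fun_prop)
            fun_prop) p.1 p.2.1
        refine le_trans (le_of_eq h1) ?_
        refine mul_le_mul_right ?_ _
        exact radial_cov ha hp (fun d => H d (Real.log (p.2.2 / a)))
    _ ≤ ∫⁻ b, (ENNReal.ofReal (2 * π) * ∫⁻ d in Ioi |b|, H d b) :=
        log_cov hp (fun b => ENNReal.ofReal (2 * π) * ∫⁻ d in Ioi |b|, H d b)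
    _ = ENNReal.ofReal (2 * π) * ∫⁻ b, ∫⁻ d in Ioi |b|, H d b := by
        rw [lintegral_const_mul' _ _ ENNReal.ofReal_ne_top]
    _ = ENNReal.ofReal (2 * π) * ∫⁻ b, ∫⁻ d, ({q : ℝ × ℝ | |q.1| < q.2}).indicator
          (fun q => H q.2 q.1) (b, d) := by
        congr 2
        ext b
        rw [← lintegral_indicator measurableSet_Ioi]
        rfl
    _ = ENNReal.ofReal (2 * π) * ∫⁻ d, ∫⁻ b, ({q : ℝ × ℝ | |q.1| < q.2}).indicator
          (fun q => H q.2 q.1) (b, d) := by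
        congr 1
        apply lintegral_lintegral_swap
        apply Measurable.aemeasurable
        have hset : MeasurableSet {q : ℝ × ℝ | |q.1| < q.2} :=
          measurableSet_lt (by fun_prop) (by fun_prop)
        exact Measurable.indicator (hH.comp measurable_swap) hset
    _ = _ := by
        congr 1
        rw [← lintegral_indicator measurableSet_Ioi]
        apply lintegral_congr
        intro d
        by_cases hd : 0 < d
        · rw [indicator_of_mem (show d ∈ Ioi 0 from hd), ← lintegral_indicator measurableSet_Ioo]
          apply lintegral_congr
          intro b
          by_cases hb : |b| < d
          · rw [indicator_of_mem (show (b, d) ∈ {q : ℝ × ℝ | |q.1| < q.2} from hb),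
              indicator_of_mem (show b ∈ Ioo (-d) d from abs_lt.1 hb)]
          · rw [indicator_of_notMem (show (b, d) ∉ {q : ℝ × ℝ | |q.1| < q.2} from hb),
              indicator_of_notMem (show b ∉ Ioo (-d) d from fun h => hb (abs_lt.2 h))]
        · rw [indicator_of_notMem (show d ∉ Ioi 0 from hd)]
          rw [← lintegral_zero (μ := volume (α := ℝ))]
          apply lintegral_congr
          intro b
          rw [indicator_of_notMem]
          intro h
          have : |b| < d := h
          linarith [abs_nonneg b, not_lt.1 hd]

def Hmid (s S : ℝ) (d _b : ℝ) : ℝ≥0∞ := (Icc s S).indicator (fun d => ENNReal.ofReal (d ^ 2)⁻¹) d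

def Hgrad (s : ℝ) (d b : ℝ) : ℝ≥0∞ := (Ici s).indicator (fun d => ENNReal.ofReal ((d ^ 2)⁻¹ *
  (d⁻¹ + Real.exp b / Real.sinh d + Real.exp (b / 2) / Real.cosh (d / 2)))) d

def Hheat (t : ℝ) (d _b : ℝ) : ℝ≥0∞ :=
  ENNReal.ofReal (d * (t ^ (-(3 : ℝ)/2) * Real.exp (-(d ^ 2) / (4 * t))))

lemma measurable_Hmid (s S : ℝ) : Measurable (Function.uncurry (Hmid s S)) := by
  have h : Measurable ((Icc s S).indicator (fun d : ℝ => ENNReal.ofReal (d ^ 2)⁻¹)) :=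
    Measurable.indicator (by fun_prop) measurableSet_Icc
  exact h.comp measurable_fst

lemma measurable_Hgrad (s : ℝ) : Measurable (Function.uncurry (Hgrad s)) := by
  have h : Measurable ((Prod.fst ⁻¹' Ici s).indicator (fun q : ℝ × ℝ => ENNReal.ofReal ((q.1 ^ 2)⁻¹ *
      (q.1⁻¹ + Real.exp q.2 / Real.sinh q.1 + Real.exp (q.2 / 2) / Real.cosh (q.1 / 2))))) :=
    Measurable.indicator (by fun_prop) (measurable_fst measurableSet_Ici)
  exact h

lemma measurable_Hheat (t : ℝ) : Measurable (Function.uncurry (Hheat t)) := by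
  unfold Function.uncurry Hheat
  fun_prop

lemma int_Hmid {s S : ℝ} (hs : 0 < s) :
    ∫⁻ d in Ioi (0:ℝ), ∫⁻ b in Ioo (-d) d, Hmid s S d b ≤ ENNReal.ofReal (2 * (S / s)) := by
  calc _ = ∫⁻ d in Ioi (0:ℝ), (Icc s S).indicator (fun d => ENNReal.ofReal (d ^ 2)⁻¹) d
            * ENNReal.ofReal (d - -d) := by
        simp [Hmid]
    _ ≤ ∫⁻ d in Ioi (0:ℝ), (Icc s S).indicator (fun d => ENNReal.ofReal (2 / s)) d := by
        apply setLIntegral_mono' measurableSet_Ioi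
        intro d hd
        have hd : 0 < d := hd
        by_cases h : d ∈ Icc s S
        · rw [indicator_of_mem h, indicator_of_mem h, ← ENNReal.ofReal_mul (by positivity)]
          apply ENNReal.ofReal_le_ofReal
          have : (d ^ 2)⁻¹ * (d - -d) = 2 / d := by field_simp; ring
          rw [this]
          exact div_le_div_of_nonneg_left (by norm_num) hs h.1
        · rw [indicator_of_notMem h, zero_mul]; simp
    _ ≤ ∫⁻ d, (Icc s S).indicator (fun d => ENNReal.ofReal (2 / s)) d :=
        setLIntegral_le_lintegral _ _
    _ = ENNReal.ofReal (2 / s) * ENNReal.ofReal (S - s) := by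
        rw [lintegral_indicator measurableSet_Icc]; simp
    _ ≤ _ := by
        rw [← ENNReal.ofReal_mul (by positivity)]
        apply ENNReal.ofReal_le_ofReal
        have : 2 / s * (S - s) = 2 * (S / s) - 2 := by field_simp
        linarith

lemma int_Hgrad_inner {d : ℝ} (hd : 0 < d) :
    ∫⁻ b in Ioo (-d) d, ENNReal.ofReal ((d ^ 2)⁻¹ *
      (d⁻¹ + Real.exp b / Real.sinh d + Real.exp (b / 2) / Real.cosh (d / 2)))
    ≤ ENNReal.ofReal (8 * (d ^ 2)⁻¹) := by
  have hs : 0 < Real.sinh d := Real.sinh_pos_iff.2 hd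
  have hc : 0 < Real.cosh (d / 2) := Real.cosh_pos _
  have hcont : Continuous fun b : ℝ => (d ^ 2)⁻¹ *
      (d⁻¹ + Real.exp b / Real.sinh d + Real.exp (b / 2) / Real.cosh (d / 2)) := by
    fun_prop
  rw [← ofReal_integral_eq_lintegral_ofReal]
  · apply ENNReal.ofReal_le_ofReal
    rw [← integral_Ioc_eq_integral_Ioo, ← intervalIntegral.integral_of_le (by linarith)]
    have hder : ∀ b ∈ uIcc (-d) d, HasDerivAt (fun b : ℝ => (d ^ 2)⁻¹ *
        (b * d⁻¹ + Real.exp b / Real.sinh d + 2 * Real.exp (b / 2) / Real.cosh (d / 2)))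
        ((d ^ 2)⁻¹ *
      (d⁻¹ + Real.exp b / Real.sinh d + Real.exp (b / 2) / Real.cosh (d / 2))) b := by
      intro b _
      apply HasDerivAt.const_mul
      apply HasDerivAt.add
      · apply HasDerivAt.add
        · simpa using (hasDerivAt_id b).mul_const d⁻¹
        · exact (Real.hasDerivAt_exp b).div_const _
      · apply HasDerivAt.div_const
        have := (((hasDerivAt_id b).div_const 2).exp).const_mul 2
        have h' : Real.exp (b / 2) = 2 * (Real.exp (b / 2) * (1 / 2)) := by ring
        rw [h']
        exact this
    rw [intervalIntegral.integral_eq_sub_of_hasDerivAt hder (hcont.intervalIntegrable _ _)]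
    have e1 : Real.exp d - Real.exp (-d) = 2 * Real.sinh d := by rw [Real.sinh_eq]; ring
    have e2 : Real.exp (d / 2) - Real.exp (-d / 2) = 2 * Real.sinh (d / 2) := by
      rw [Real.sinh_eq, neg_div]; ring
    have e3 : Real.sinh (d / 2) / Real.cosh (d / 2) ≤ 1 := by
      rw [div_le_one hc]; exact (Real.sinh_lt_cosh _).le
    calc _ = (d ^ 2)⁻¹ * (2 * (d * d⁻¹) + (Real.exp d - Real.exp (-d)) / Real.sinh d
          + 2 * (Real.exp (d / 2) - Real.exp (-d / 2)) / Real.cosh (d / 2)) := by ring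
      _ = (d ^ 2)⁻¹ * (4 + 4 * (Real.sinh (d / 2) / Real.cosh (d / 2))) := by
        rw [e1, e2, mul_inv_cancel₀ hd.ne', mul_div_assoc, div_self hs.ne']; ring
      _ ≤ (d ^ 2)⁻¹ * 8 := by gcongr; linarith
      _ = _ := by ring
  · exact (hcont.continuousOn.integrableOn_Icc (a := -d) (b := d)).mono_set Ioo_subset_Icc_self
  · exact Eventually.of_forall (fun b => by positivity)

lemma int_Hgrad {s : ℝ} (hs : 0 < s) :
    ∫⁻ d in Ioi (0:ℝ), ∫⁻ b in Ioo (-d) d, Hgrad s d b ≤ ENNReal.ofReal (8 / s) := by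
  calc _ ≤ ∫⁻ d in Ioi (0:ℝ), (Ici s).indicator (fun d => ENNReal.ofReal (8 * (d ^ 2)⁻¹)) d := by
        apply setLIntegral_mono' measurableSet_Ioi
        intro d hd
        unfold Hgrad
        by_cases h : d ∈ Ici s
        · simp only [indicator_of_mem h]
          exact int_Hgrad_inner hd
        · simp only [indicator_of_notMem h, lintegral_zero]; simp
    _ ≤ ∫⁻ d, (Ici s).indicator (fun d => ENNReal.ofReal (8 * (d ^ 2)⁻¹)) d :=
        setLIntegral_le_lintegral _ _
    _ = ∫⁻ d in Ioi s, ENNReal.ofReal (8 * d ^ (-2 : ℝ)) := by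
        rw [lintegral_indicator measurableSet_Ici, setLIntegral_congr Ioi_ae_eq_Ici.symm]
        apply setLIntegral_congr_fun measurableSet_Ioi
        intro d hd
        have hd : 0 < d := hs.trans hd
        dsimp only
        rw [Real.rpow_neg hd.le]; norm_num
    _ = _ := by
        rw [← ofReal_integral_eq_lintegral_ofReal]
        · rw [integral_const_mul, integral_Ioi_rpow_of_lt (by norm_num) hs]
          congr 1
          norm_num
          rw [Real.rpow_neg hs.le]; norm_num
          ring
        · exact (integrableOn_Ioi_rpow_of_lt (by norm_num) hs).const_mul 8
        · filter_upwards [self_mem_ae_restrict measurableSet_Ioi] with d hd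
          have hd : 0 < d := hs.trans hd
          positivity

def C3 : ℝ := 2 * ((4:ℝ) ^ ((3:ℝ)/2) * (1 / 2) * Real.Gamma (3 / 2))

lemma C3_nonneg : 0 ≤ C3 := by
  unfold C3
  have := Real.Gamma_nonneg_of_nonneg (s := 3/2) (by norm_num)
  positivity

lemma int_Hheat {t : ℝ} (ht : 0 < t) :
    ∫⁻ d in Ioi (0:ℝ), ∫⁻ b in Ioo (-d) d, Hheat t d b ≤ ENNReal.ofReal C3 := by
  have hb : (0:ℝ) < 1 / (4 * t) := by positivity
  calc _ = ∫⁻ d in Ioi (0:ℝ), ENNReal.ofReal (2 * t ^ (-(3 : ℝ)/2) *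
            (d ^ (2:ℝ) * Real.exp (-(1 / (4 * t)) * d ^ (2:ℝ)))) := by
        apply setLIntegral_congr_fun measurableSet_Ioi
        intro d hd
        have hd : 0 < d := hd
        unfold Hheat
        simp only [lintegral_const, Measure.restrict_apply MeasurableSet.univ, univ_inter,
          Real.volume_Ioo]
        rw [← ENNReal.ofReal_mul (by positivity)]
        congr 1
        have : -(d ^ 2) / (4 * t) = -(1 / (4 * t)) * d ^ (2:ℝ) := by
          norm_num; ring
        rw [this]; norm_num; ring
    _ ≤ _ := by
        rw [← ofReal_integral_eq_lintegral_ofReal]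
        · rw [integral_const_mul,
            integral_rpow_mul_exp_neg_mul_rpow (by norm_num) (by norm_num) hb]
          apply ENNReal.ofReal_le_ofReal
          unfold C3
          have e1 : (1 / (4 * t)) ^ (-((2:ℝ) + 1) / 2) = (4:ℝ) ^ ((3:ℝ)/2) * t ^ ((3:ℝ)/2) := by
            rw [one_div, Real.inv_rpow (by positivity), ← Real.rpow_neg (by positivity),
              Real.mul_rpow (by norm_num) ht.le]
            norm_num
          have e2 : t ^ (-(3 : ℝ)/2) * t ^ ((3:ℝ)/2) = 1 := by
            rw [← Real.rpow_add ht]; norm_num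
          rw [e1]
          have e3 : ((2:ℝ) + 1) / 2 = 3 / 2 := by norm_num
          rw [e3]
          apply le_of_eq
          calc _ = (t ^ (-(3 : ℝ)/2) * t ^ ((3:ℝ)/2)) * (2 * ((4:ℝ) ^ ((3:ℝ)/2) * (1 / 2) * Real.Gamma (3 / 2))) := by ring
            _ = _ := by rw [e2, one_mul]
        · apply Integrable.const_mul
          have := integrableOn_rpow_mul_exp_neg_mul_rpow (p := 2) (s := 2) (by norm_num) (by norm_num) hb
          exact this
        · filter_upwards [self_mem_ae_restrict measurableSet_Ioi] with d hd
          have hd : 0 < d := hd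
          positivity

/-- kernel from radial profile -/
def Ker (H : ℝ → ℝ → ℝ≥0∞) (x p : G) : ℝ≥0∞ :=
  ENNReal.ofReal (Ee x p / Real.sinh (hd x p)) * H (hd x p) (Real.log (p.2.2 / x.2.2))

lemma measurable_Ker {H : ℝ → ℝ → ℝ≥0∞} (hH : Measurable (Function.uncurry H)) {Y : Type*}
    [MeasurableSpace Y] {f g : Y → G} (hf : Measurable f) (hg : Measurable g) :
    Measurable fun y => Ker H (f y) (g y) := by
  unfold Ker
  have m1 := measurable_hd' hf hg
  have m2 := measurable_Ee' hf hg
  have m3 : Measurable (fun y => H (hd (f y) (g y)) (Real.log ((g y).2.2 / (f y).2.2))) :=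
    hH.comp (m1.prodMk (show Measurable (fun y => Real.log ((g y).2.2 / (f y).2.2)) by fun_prop))
  fun_prop

lemma Ker_mid {s S : ℝ} (hs : 0 < s) (p : G) (hp : 0 < p.2.2) :
    ∫⁻ x, Ker (Hmid s S) x p ∂ρG ≤ ENNReal.ofReal (2 * π * (2 * (S / s))) := by
  rw [ENNReal.ofReal_mul (by positivity)]
  exact (polar p hp _ (measurable_Hmid s S)).trans (mul_le_mul_right (int_Hmid hs) _)

lemma Ker_grad {s : ℝ} (hs : 0 < s) (p : G) (hp : 0 < p.2.2) :
    ∫⁻ x, Ker (Hgrad s) x p ∂ρG ≤ ENNReal.ofReal (2 * π * (8 / s)) := by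
  rw [ENNReal.ofReal_mul (by positivity)]
  exact (polar p hp _ (measurable_Hgrad s)).trans (mul_le_mul_right (int_Hgrad hs) _)

lemma Ker_heat {t : ℝ} (ht : 0 < t) (p : G) (hp : 0 < p.2.2) :
    ∫⁻ x, Ker (Hheat t) x p ∂ρG ≤ ENNReal.ofReal (2 * π * C3) := by
  rw [ENNReal.ofReal_mul (by positivity)]
  exact (polar p hp _ (measurable_Hheat t)).trans (mul_le_mul_right (int_Hheat ht) _)

instance : SFinite ρG := by unfold ρG; infer_instance

lemma schur {Θ : ℝ → ℝ → ℝ≥0∞} (hΘ : Measurable (Function.uncurry Θ)) {B : ℝ≥0∞}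
    (hB : ∀ p : G, 0 < p.2.2 → ∫⁻ x, Ker Θ x p ∂ρG ≤ B) {Y : Type*} [MeasurableSpace Y]
    (ν : Measure Y) [SFinite ν] {P : Y → G} (hP : Measurable P) (hpos : ∀ᵐ y ∂ν, 0 < (P y).2.2) :
    ∫⁻ x, ∫⁻ y, Ker Θ x (P y) ∂ν ∂ρG ≤ B * ν univ := by
  rw [lintegral_lintegral_swap]
  · calc _ ≤ ∫⁻ y, B ∂ν := by
          apply lintegral_mono_ae
          filter_upwards [hpos] with y hy using hB _ hy
      _ = _ := by simp
  · exact (measurable_Ker hΘ measurable_fst (hP.comp measurable_snd)).aemeasurable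

def N0 : ℝ := (8 * Real.pi ^ ((3 : ℝ)/2))⁻¹

lemma N0_nonneg : 0 ≤ N0 := by unfold N0; positivity

def phi (t d : ℝ) : ℝ := d / Real.sinh d * (t ^ (-(3 : ℝ)/2) * Real.exp (-(d ^ 2) / (4 * t)))

def kk (t : ℝ) (x w : G) : ℝ :=
  N0 * Ee x w * (if hd x w = 0 then 1 else hd x w / Real.sinh (hd x w)) *
    t ^ (-(3 : ℝ)/2) * Real.exp (-(hd x w ^ 2) / (4 * t))

lemma kk_eq {t : ℝ} {x w : G} (h : hd x w ≠ 0) : kk t x w = N0 * (Ee x w * phi t (hd x w)) := by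
  unfold kk phi
  rw [if_neg h]; ring

lemma Ee_pos {x w : G} (hx : 0 < x.2.2) (hw : 0 < w.2.2) : 0 < Ee x w := by
  unfold Ee; positivity

lemma kk_nonneg {t : ℝ} (ht : 0 < t) {x w : G} (hx : 0 < x.2.2) (hw : 0 < w.2.2) :
    0 ≤ kk t x w := by
  have h1 := N0_nonneg
  have h2 := (Ee_pos hx hw).le
  have h3 := hd_nonneg hx hw
  have h4 := sinh_hd_nonneg hx hw
  unfold kk
  have : 0 ≤ (if hd x w = 0 then 1 else hd x w / Real.sinh (hd x w)) := by
    split_ifs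
    · norm_num
    · positivity
  positivity

lemma gauss_aux {t d : ℝ} (ht : 0 < t) (hd : 0 < d) :
    t ^ (-(3 : ℝ)/2) * Real.exp (-(d ^ 2) / (4 * t)) ≤ 33 * (d ^ 3)⁻¹ ∧
    t ^ (-(3 : ℝ)/2) * Real.exp (-(d ^ 2) / (4 * t)) * (d / (2 * t)) ≤ 193 * (d ^ 4)⁻¹ := by
  obtain ⟨τ, hτ, rfl⟩ : ∃ τ : ℝ, 0 < τ ∧ t = τ ^ 2 := ⟨√t, by positivity, (Real.sq_sqrt ht.le).symm⟩
  have e1 : (τ ^ 2) ^ (-(3 : ℝ)/2) = (τ ^ 3)⁻¹ := by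
    rw [← Real.rpow_natCast τ 2, ← Real.rpow_mul hτ.le, ← Real.rpow_natCast τ 3,
      ← Real.rpow_neg hτ.le]
    norm_num
  obtain ⟨q, hq, rfl⟩ : ∃ q : ℝ, 0 < q ∧ d = q * τ := ⟨d / τ, by positivity, by field_simp⟩
  have e2 : -((q * τ) ^ 2) / (4 * τ ^ 2) = -(q ^ 2 / 4) := by field_simp
  rw [e1, e2, Real.exp_neg]
  have p2 := Real.pow_div_factorial_le_exp (x := q ^ 2 / 4) (by positivity) 2
  have p3 := Real.pow_div_factorial_le_exp (x := q ^ 2 / 4) (by positivity) 3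
  have p1 : 1 ≤ Real.exp (q ^ 2 / 4) := Real.one_le_exp (by positivity)
  set X := Real.exp (q ^ 2 / 4) with hX
  have hXp : 0 < X := Real.exp_pos _
  norm_num [Nat.factorial] at p2 p3
  have q3 : q ^ 3 ≤ 33 * X := by
    have : q ^ 3 ≤ 1 + q ^ 4 := by
      nlinarith [sq_nonneg (q ^ 2 - q / 2), sq_nonneg (q - 1), sq_nonneg (q ^ 2 - 1)]
    nlinarith
  have q5 : q ^ 5 ≤ 385 * X := by
    have : q ^ 5 ≤ 1 + q ^ 6 := by
      nlinarith [sq_nonneg (q ^ 3 - q ^ 2 / 2), sq_nonneg (q ^ 2 - 1), sq_nonneg (q ^ 3 - 1),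
        sq_nonneg (q - 1), sq_nonneg (q ^ 3 - q), pow_pos hq 3, pow_pos hq 4]
    nlinarith
  constructor
  · have : 33 * ((q * τ) ^ 3)⁻¹ - (τ ^ 3)⁻¹ * X⁻¹ = (33 * X - q ^ 3) / (q ^ 3 * τ ^ 3 * X) := by
      field_simp
    have h0 : 0 ≤ (33 * X - q ^ 3) / (q ^ 3 * τ ^ 3 * X) := div_nonneg (by linarith) (by positivity)
    linarith
  · have : 193 * ((q * τ) ^ 4)⁻¹ - (τ ^ 3)⁻¹ * X⁻¹ * (q * τ / (2 * τ ^ 2))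
        = (386 * X - q ^ 5) / (2 * q ^ 4 * τ ^ 4 * X) := by
      field_simp; ring
    have h0 : 0 ≤ (386 * X - q ^ 5) / (2 * q ^ 4 * τ ^ 4 * X) :=
      div_nonneg (by linarith) (by positivity)
    linarith

lemma phi_nonneg {t d : ℝ} (ht : 0 < t) (hd : 0 < d) : 0 ≤ phi t d := by
  have := Real.sinh_pos_iff.2 hd
  unfold phi; positivity

lemma phi_le {t d : ℝ} (ht : 0 < t) (hd : 0 < d) :
    phi t d ≤ 33 * ((d ^ 2)⁻¹ / Real.sinh d) ∧
    phi t d * (d / (2 * t)) ≤ 193 * ((d ^ 2)⁻¹ * d⁻¹ / Real.sinh d) := by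
  have hs := Real.sinh_pos_iff.2 hd
  obtain ⟨h1, h2⟩ := gauss_aux ht hd
  unfold phi
  constructor
  · calc _ ≤ d / Real.sinh d * (33 * (d ^ 3)⁻¹) := by gcongr
      _ = _ := by field_simp
  · calc _ = d / Real.sinh d * (t ^ (-(3 : ℝ)/2) * Real.exp (-(d ^ 2) / (4 * t)) * (d / (2 * t))) := by ring
      _ ≤ d / Real.sinh d * (193 * (d ^ 4)⁻¹) := by gcongr
      _ = _ := by field_simp

lemma kk_mid {t s S : ℝ} (ht : 0 < t) (hs : 0 < s) {x w : G} (hx : 0 < x.2.2) (hw : 0 < w.2.2)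
    (h1 : s ≤ hd x w) (h2 : hd x w ≤ S) :
    ENNReal.ofReal (kk t x w) ≤ ENNReal.ofReal (33 * N0) * Ker (Hmid s S) x w := by
  have hd0 : 0 < hd x w := hs.trans_le h1
  have hE := Ee_pos hx hw
  have hS := Real.sinh_pos_iff.2 hd0
  have hN := N0_nonneg
  unfold Ker Hmid
  rw [indicator_of_mem (show hd x w ∈ Icc s S from ⟨h1, h2⟩), ← ENNReal.ofReal_mul (by positivity),
    ← ENNReal.ofReal_mul (by positivity), kk_eq hd0.ne']
  apply ENNReal.ofReal_le_ofReal
  calc _ ≤ N0 * (Ee x w * (33 * ((hd x w ^ 2)⁻¹ / Real.sinh (hd x w)))) := by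
        gcongr; exact (phi_le ht hd0).1
    _ = _ := by ring

lemma kk_heat {t : ℝ} (ht : 0 < t) {x w : G} (hx : 0 < x.2.2) (hw : 0 < w.2.2)
    (h : hd x w ≠ 0) :
    ENNReal.ofReal (kk t x w) ≤ ENNReal.ofReal N0 * Ker (Hheat t) x w := by
  have hd0 : 0 < hd x w := lt_of_le_of_ne (hd_nonneg hx hw) h.symm
  have hE := Ee_pos hx hw
  have hS := Real.sinh_pos_iff.2 hd0
  have hN := N0_nonneg
  unfold Ker Hheat
  rw [← ENNReal.ofReal_mul (by positivity), ← ENNReal.ofReal_mul (by positivity), kk_eq hd0.ne']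
  apply ENNReal.ofReal_le_ofReal
  apply le_of_eq
  unfold phi
  ring

lemma hasDerivAt_phi {t d : ℝ} (ht : 0 < t) (hd : 0 < d) :
    HasDerivAt (phi t) (phi t d * (1 / d - Real.cosh d / Real.sinh d - d / (2 * t))) d := by
  have hs := Real.sinh_pos_iff.2 hd
  have h1 : HasDerivAt (fun d : ℝ => d / Real.sinh d)
      ((1 * Real.sinh d - d * Real.cosh d) / Real.sinh d ^ 2) d :=
    (hasDerivAt_id d).div (Real.hasDerivAt_sinh d) hs.ne'
  have h2 : HasDerivAt (fun d : ℝ => -(d ^ 2) / (4 * t)) (-(2 * d) / (4 * t)) d := by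
    have := ((hasDerivAt_pow 2 d).neg).div_const (4 * t)
    simpa using this
  have h3 := h1.mul ((h2.exp).const_mul (t ^ (-(3 : ℝ)/2)))
  have e : phi t d * (1 / d - Real.cosh d / Real.sinh d - d / (2 * t)) =
      (1 * Real.sinh d - d * Real.cosh d) / Real.sinh d ^ 2 *
        (t ^ (-(3 : ℝ)/2) * Real.exp (-(d ^ 2) / (4 * t))) +
      d / Real.sinh d * (t ^ (-(3 : ℝ)/2) * (Real.exp (-(d ^ 2) / (4 * t)) * (-(2 * d) / (4 * t)))) := by
    unfold phi
    field_simp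
    ring
  rw [e]
  exact h3

lemma contDiffAt_phi {t d : ℝ} (hd : 0 < d) : ContDiffAt ℝ 1 (phi t) d := by
  have hs := (Real.sinh_pos_iff.2 hd).ne'
  unfold phi
  refine ContDiffAt.mul (ContDiffAt.div contDiffAt_id (Real.contDiff_sinh.contDiffAt) hs) ?_
  fun_prop

lemma seg {t s : ℝ} (ht : 0 < t) (hs : 0 < s) {x : G} (hx : 0 < x.2.2) (p : ℝ → G)
    (Cd Ed : ℝ → ℝ) {u v : ℝ} (huv : u ≤ v) (hpos : ∀ z ∈ Icc u v, 0 < (p z).2.2)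
    (hfar : ∀ z ∈ Icc u v, s ≤ hd x (p z))
    (hC : ContDiff ℝ 1 (fun z => ch x (p z))) (hE : ContDiff ℝ 1 (fun z => Ee x (p z)))
    (hC' : ∀ z ∈ Icc u v, HasDerivAt (fun z => ch x (p z)) (Cd z) z)
    (hE' : ∀ z ∈ Icc u v, HasDerivAt (fun z => Ee x (p z)) (Ed z) z)
    (hb : ∀ z ∈ Icc u v, |Ed z + Ee x (p z) * (1 / hd x (p z)
        - Real.cosh (hd x (p z)) / Real.sinh (hd x (p z)) - hd x (p z) / (2 * t))
          * (Cd z / Real.sinh (hd x (p z)))| ≤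
      Ee x (p z) * (1 / hd x (p z) + Real.exp (Real.log ((p z).2.2 / x.2.2)) / Real.sinh (hd x (p z))
        + Real.exp (Real.log ((p z).2.2 / x.2.2) / 2) / Real.cosh (hd x (p z) / 2)
        + hd x (p z) / (2 * t))) :
    ‖kk t x (p v) - kk t x (p u)‖ₑ ≤
      ENNReal.ofReal (226 * N0) * ∫⁻ z in Icc u v, Ker (Hgrad s) x (p z) := by
  set f : ℝ → ℝ := fun z => N0 * (Ee x (p z) * phi t (hd x (p z))) with hf
  have hdp : ∀ z ∈ Icc u v, 0 < hd x (p z) := fun z hz => hs.trans_le (hfar z hz)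
  have hch : ∀ z ∈ Icc u v, 1 < ch x (p z) := by
    intro z hz
    rw [← cosh_hd hx (hpos z hz)]
    exact Real.one_lt_cosh.2 (hdp z hz).ne'
  have hkk : ∀ z ∈ Icc u v, kk t x (p z) = f z := fun z hz => kk_eq (hdp z hz).ne'
  rw [hkk v (right_mem_Icc.2 huv), hkk u (left_mem_Icc.2 huv)]
  have hcd : ContDiffOn ℝ 1 f (Icc u v) := by
    intro z hz
    apply ContDiffAt.contDiffWithinAt
    apply contDiffAt_const.mul
    apply hE.contDiffAt.mul
    have h1 : ContDiffAt ℝ 1 (fun z => hd x (p z)) z :=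
      ContDiffAt.comp z (Real.contDiffAt_arcosh (hch z hz)) hC.contDiffAt
    exact ContDiffAt.comp z (contDiffAt_phi (hdp z hz)) h1
  refine (enorm_sub_le_lintegral_deriv_of_contDiffOn_Icc hcd huv).trans ?_
  rw [← lintegral_const_mul' _ _ ENNReal.ofReal_ne_top]
  apply setLIntegral_mono' measurableSet_Icc
  intro z hz
  have hd0 := hdp z hz
  have hS := Real.sinh_pos_iff.2 hd0
  have hE0 := Ee_pos hx (hpos z hz)
  have hN := N0_nonneg
  have hphi := phi_nonneg ht hd0
  have hder : HasDerivAt f (N0 * (Ed z * phi t (hd x (p z)) + Ee x (p z) * (phi t (hd x (p z)) *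
      (1 / hd x (p z) - Real.cosh (hd x (p z)) / Real.sinh (hd x (p z)) - hd x (p z) / (2 * t))
      * ((Real.sinh (hd x (p z)))⁻¹ * Cd z)))) z := by
    apply HasDerivAt.const_mul
    apply (hE' z hz).mul
    have h1 : HasDerivAt (fun z => hd x (p z)) ((Real.sinh (hd x (p z)))⁻¹ * Cd z) z := by
      rw [sinh_hd hx (hpos z hz)]
      exact (Real.hasDerivAt_arcosh (hch z hz)).comp z (hC' z hz)
    exact (hasDerivAt_phi ht hd0).comp z h1
  rw [hder.deriv, ← ofReal_norm, Real.norm_eq_abs]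
  unfold Ker Hgrad
  rw [indicator_of_mem (show hd x (p z) ∈ Ici s from hfar z hz),
    ← ENNReal.ofReal_mul (by positivity), ← ENNReal.ofReal_mul (by positivity)]
  apply ENNReal.ofReal_le_ofReal
  have hb := hb z hz
  set d := hd x (p z) with hdd
  set W1 := Real.exp (Real.log ((p z).2.2 / x.2.2)) / Real.sinh d with hW1
  set W2 := Real.exp (Real.log ((p z).2.2 / x.2.2) / 2) / Real.cosh (d / 2) with hW2
  have hW1p : 0 ≤ W1 := by positivity
  have hW2p : 0 ≤ W2 := div_nonneg (Real.exp_pos _).le (Real.cosh_pos _).le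
  obtain ⟨b1, b2⟩ := phi_le ht hd0
  calc _ = N0 * phi t d * |Ed z + Ee x (p z) * (1 / d
        - Real.cosh d / Real.sinh d - d / (2 * t)) * (Cd z / Real.sinh d)| := by
        have e0 : N0 * (Ed z * phi t d + Ee x (p z) * (phi t d *
          (1 / d - Real.cosh d / Real.sinh d - d / (2 * t)) * ((Real.sinh d)⁻¹ * Cd z)))
          = N0 * phi t d * (Ed z + Ee x (p z) * (1 / d
          - Real.cosh d / Real.sinh d - d / (2 * t)) * (Cd z / Real.sinh d)) := by ring
        rw [e0, abs_mul, abs_of_nonneg (mul_nonneg hN hphi)]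
    _ ≤ N0 * phi t d * (Ee x (p z) * (1 / d + W1 + W2 + d / (2 * t))) := by gcongr
    _ = N0 * Ee x (p z) * (phi t d * (1 / d + W1 + W2) + phi t d * (d / (2 * t))) := by ring
    _ ≤ N0 * Ee x (p z) * (33 * ((d ^ 2)⁻¹ / Real.sinh d) * (1 / d + W1 + W2) +
          193 * ((d ^ 2)⁻¹ * d⁻¹ / Real.sinh d)) := by gcongr
    _ ≤ N0 * Ee x (p z) * (33 * ((d ^ 2)⁻¹ / Real.sinh d) * (1 / d + W1 + W2) +
          193 * ((d ^ 2)⁻¹ * d⁻¹ / Real.sinh d) + 193 * ((d ^ 2)⁻¹ / Real.sinh d) * (W1 + W2)) := by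
        apply mul_le_mul_of_nonneg_left _ (by positivity)
        have : 0 ≤ 193 * ((d ^ 2)⁻¹ / Real.sinh d) * (W1 + W2) := by positivity
        linarith
    _ = _ := by ring

lemma coth_bd {d : ℝ} (hd : 0 < d) : 1 ≤ Real.cosh d / Real.sinh d ∧
    Real.cosh d / Real.sinh d ≤ 1 + 1 / d := by
  have hs := Real.sinh_pos_iff.2 hd
  have h1 : d ≤ Real.sinh d := Real.self_le_sinh_iff.2 hd.le
  have h2 : Real.cosh d - Real.sinh d = Real.exp (-d) := Real.cosh_sub_sinh d
  have h3 : 0 < Real.exp (-d) := Real.exp_pos _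
  have h4 : Real.exp (-d) ≤ 1 := Real.exp_le_one_iff.2 (by linarith)
  constructor
  · rw [le_div_iff₀ hs]; linarith
  · rw [div_le_iff₀ hs]
    have : 1 ≤ 1 / d * Real.sinh d := by
      rw [one_div, inv_mul_eq_div, le_div_iff₀ hd]; linarith
    nlinarith

lemma bound_vert {d D E T W1 W2 : ℝ} (hd : 0 < d) (hE : 0 < E) (hT : 0 ≤ T) (h1 : |D| ≤ 1)
    (h2 : 1 + D ≤ W1) (hW2 : 0 ≤ W2) :
    |-E + E * (1 / d - Real.cosh d / Real.sinh d - T) * D| ≤ E * (1 / d + W1 + W2 + T) := by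
  obtain ⟨c1, c2⟩ := coth_bd hd
  set c := Real.cosh d / Real.sinh d
  have e : -E + E * (1 / d - c - T) * D = E * (-(1 + D) + D * (1 + 1 / d - c) - D * T) := by ring
  rw [e, abs_mul, abs_of_pos hE]
  apply mul_le_mul_of_nonneg_left _ hE.le
  have a1 : |D * (1 + 1 / d - c)| ≤ 1 / d := by
    rw [abs_mul, abs_of_nonneg (by linarith : 0 ≤ 1 + 1 / d - c)]
    nlinarith [abs_nonneg D]
  have a2 : |D * T| ≤ T := by
    rw [abs_mul, abs_of_nonneg hT]; nlinarith
  rw [abs_le] at *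
  constructor <;> linarith [a1.1, a1.2, a2.1, a2.2, h1.1, h1.2]

lemma bound_horiz {d D E T W1 W2 : ℝ} (hd : 0 < d) (hE : 0 < E) (hT : 0 ≤ T) (h1 : |D| ≤ 1)
    (h2 : |D| ≤ W2) (hW1 : 0 ≤ W1) :
    |0 + E * (1 / d - Real.cosh d / Real.sinh d - T) * D| ≤ E * (1 / d + W1 + W2 + T) := by
  obtain ⟨c1, c2⟩ := coth_bd hd
  set c := Real.cosh d / Real.sinh d
  have e : 0 + E * (1 / d - c - T) * D = E * (D * (1 / d - c) - D * T) := by ring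
  rw [e, abs_mul, abs_of_pos hE]
  apply mul_le_mul_of_nonneg_left _ hE.le
  have hd' : 0 < 1 / d := by positivity
  have a1 : |D * (1 / d - c)| ≤ 1 / d + W2 := by
    rw [abs_mul]
    have : |1 / d - c| ≤ 1 / d + 1 := by rw [abs_le]; constructor <;> linarith
    nlinarith [abs_nonneg D]
  have a2 : |D * T| ≤ T := by
    rw [abs_mul, abs_of_nonneg hT]; nlinarith
  have := abs_sub (D * (1 / d - c)) (D * T)
  linarith

lemma seg_vert {t s : ℝ} (ht : 0 < t) (hs : 0 < s) {x : G} (hx : 0 < x.2.2) (w1 w2 a : ℝ)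
    (ha : 0 < a) {lo hi u v : ℝ} (hu : u ∈ Icc lo hi) (hv : v ∈ Icc lo hi)
    (hfar : ∀ z ∈ Icc lo hi, s ≤ hd x (w1, w2, a * Real.exp z)) :
    ‖kk t x (w1, w2, a * Real.exp v) - kk t x (w1, w2, a * Real.exp u)‖ₑ ≤
      ENNReal.ofReal (226 * N0) * ∫⁻ z in Icc lo hi, Ker (Hgrad s) x (w1, w2, a * Real.exp z) := by
  wlog huv : u ≤ v generalizing u v
  · have := this hv hu (le_of_not_ge huv)
    rwa [← neg_sub, enorm_neg]
  have hpos : ∀ z : ℝ, 0 < a * Real.exp z := fun z => by positivity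
  have hsub : Icc u v ⊆ Icc lo hi := Icc_subset_Icc hu.1 hv.2
  refine le_trans ?_ (mul_le_mul_right (lintegral_mono_set hsub) _)
  have eC : (fun z => ch x (w1, w2, a * Real.exp z)) = fun z =>
      (x.2.2 ^ 2 + ((x.1 - w1) ^ 2 + (x.2.1 - w2) ^ 2)) / (2 * x.2.2 * a) * Real.exp (-z)
        + a / (2 * x.2.2) * Real.exp z := by
    ext z; unfold ch; dsimp only; rw [Real.exp_neg]; field_simp; ring
  have eE : (fun z => Ee x (w1, w2, a * Real.exp z)) = fun z => (x.2.2 * a)⁻¹ * Real.exp (-z) := by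
    ext z; unfold Ee; dsimp only; rw [Real.exp_neg]; field_simp
  refine seg ht hs hx (fun z => (w1, w2, a * Real.exp z))
    (fun z => a * Real.exp z / x.2.2 - ch x (w1, w2, a * Real.exp z))
    (fun z => - Ee x (w1, w2, a * Real.exp z)) huv (fun z _ => hpos z)
    (fun z hz => hfar z (hsub hz)) (by rw [eC]; fun_prop) (by rw [eE]; fun_prop) ?_ ?_ ?_
  · intro z _
    have h := congrFun eC z
    rw [eC, h]
    have h1 : HasDerivAt (fun z : ℝ => Real.exp (-z)) (-Real.exp (-z)) z := by
      simpa using (hasDerivAt_neg z).exp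
    refine ((h1.const_mul ((x.2.2 ^ 2 + ((x.1 - w1) ^ 2 + (x.2.1 - w2) ^ 2)) / (2 * x.2.2 * a))).add
      ((Real.hasDerivAt_exp z).const_mul (a / (2 * x.2.2)))).congr_deriv ?_
    field_simp
    ring
  · intro z _
    have h := congrFun eE z
    rw [eE, h]
    have h1 : HasDerivAt (fun z : ℝ => Real.exp (-z)) (-Real.exp (-z)) z := by
      simpa using (hasDerivAt_neg z).exp
    refine (h1.const_mul ((x.2.2 * a)⁻¹)).congr_deriv ?_
    ring
  · intro z hz
    dsimp only
    set p : G := (w1, w2, a * Real.exp z) with hp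
    have hp2 : p.2.2 = a * Real.exp z := rfl
    have hpp : 0 < p.2.2 := hpos z
    have hd0 : 0 < hd x p := hs.trans_le (hfar z (hsub hz))
    have hS := Real.sinh_pos_iff.2 hd0
    have hcs : Real.sinh (hd x p) ≤ ch x p := by
      rw [← cosh_hd hx hpp]; exact (Real.sinh_lt_cosh _).le
    rw [← hp2, Real.exp_log (by positivity)]
    apply bound_vert hd0 (Ee_pos hx hpp) (by positivity)
    · rw [abs_div, abs_of_pos hS, div_le_one hS]
      apply abs_le_of_sq_le_sq _ hS.le
      rw [sinh_hd_sq hx hpp]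
      have : ch x p ^ 2 - 1 - (p.2.2 / x.2.2 - ch x p) ^ 2 =
        ((x.1 - p.1) ^ 2 + (x.2.1 - p.2.1) ^ 2) / x.2.2 ^ 2 := by
        unfold ch; field_simp; ring
      have h0 : 0 ≤ ((x.1 - p.1) ^ 2 + (x.2.1 - p.2.1) ^ 2) / x.2.2 ^ 2 := by positivity
      linarith
    · have : 1 + (p.2.2 / x.2.2 - ch x p) / Real.sinh (hd x p) =
        (Real.sinh (hd x p) + (p.2.2 / x.2.2 - ch x p)) / Real.sinh (hd x p) := by field_simp
      rw [this]
      gcongr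
      linarith
    · positivity

lemma horiz_half {x p : G} (hx : 0 < x.2.2) (hp : 0 < p.2.2) (hd0 : 0 < hd x p) {s : ℝ}
    (hs : s ^ 2 ≤ (x.1 - p.1) ^ 2 + (x.2.1 - p.2.1) ^ 2) :
    |-s / x.2.2 / Real.sinh (hd x p)| ≤
      Real.exp (Real.log (p.2.2 / x.2.2) / 2) / Real.cosh (hd x p / 2) := by
  set d := hd x p with hdd
  have hS := Real.sinh_pos_iff.2 hd0
  have hS2 : 0 < Real.sinh (d / 2) := Real.sinh_pos_iff.2 (by linarith)
  have hC2 := Real.cosh_pos (d / 2)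
  have e1 : Real.sinh d = 2 * Real.sinh (d / 2) * Real.cosh (d / 2) := by
    rw [← Real.sinh_two_mul]; congr 1; ring
  have e2 : ch x p = 1 + 2 * Real.sinh (d / 2) ^ 2 := by
    rw [← cosh_hd hx hp, ← hdd]
    have : d = 2 * (d / 2) := by ring
    rw [this, Real.cosh_two_mul, Real.cosh_sq]; ring_nf
  set e := Real.exp (Real.log (p.2.2 / x.2.2) / 2) with he
  have he2 : e ^ 2 = p.2.2 / x.2.2 := by
    rw [he, ← Real.exp_nat_mul]; push_cast
    rw [mul_div_cancel₀ _ (by norm_num), Real.exp_log (by positivity)]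
  have hep : 0 < e := Real.exp_pos _
  have key : |s| / x.2.2 ≤ 2 * e * Real.sinh (d / 2) := by
    apply abs_le_of_sq_le_sq' _ (by positivity) |>.2
    have h1 : (2 * e * Real.sinh (d / 2)) ^ 2 = 2 * (p.2.2 / x.2.2) * (ch x p - 1) := by
      rw [e2, ← he2]; ring
    have h2 : 2 * (p.2.2 / x.2.2) * (ch x p - 1) =
      ((x.2.2 - p.2.2) ^ 2 + ((x.1 - p.1) ^ 2 + (x.2.1 - p.2.1) ^ 2)) / x.2.2 ^ 2 := by
      unfold ch; field_simp; ring
    rw [h1, h2, div_pow, sq_abs]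
    gcongr
    nlinarith [sq_nonneg (x.2.2 - p.2.2)]
  rw [abs_div, abs_div, abs_neg, abs_of_pos hx, abs_of_pos hS, e1, div_le_div_iff₀ (by positivity) hC2]
  nlinarith

lemma seg_h1 {t s : ℝ} (ht : 0 < t) (hs : 0 < s) {x : G} (hx : 0 < x.2.2) (w1 w2 a : ℝ)
    (ha : 0 < a) {lo hi u v : ℝ} (hu : u ∈ Icc lo hi) (hv : v ∈ Icc lo hi)
    (hfar : ∀ z ∈ Icc lo hi, s ≤ hd x (w1 + z * a, w2, a)) :
    ‖kk t x (w1 + v * a, w2, a) - kk t x (w1 + u * a, w2, a)‖ₑ ≤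
      ENNReal.ofReal (226 * N0) * ∫⁻ z in Icc lo hi, Ker (Hgrad s) x (w1 + z * a, w2, a) := by
  wlog huv : u ≤ v generalizing u v
  · have := this hv hu (le_of_not_ge huv)
    rwa [← neg_sub, enorm_neg]
  have hsub : Icc u v ⊆ Icc lo hi := Icc_subset_Icc hu.1 hv.2
  refine le_trans ?_ (mul_le_mul_right (lintegral_mono_set hsub) _)
  refine seg ht hs hx (fun z => (w1 + z * a, w2, a))
    (fun z => -(x.1 - (w1 + z * a)) / x.2.2) (fun z => 0) huv (fun z _ => ha)
    (fun z hz => hfar z (hsub hz)) (by unfold ch; dsimp only; fun_prop)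
    (by unfold Ee; dsimp only; fun_prop) ?_ ?_ ?_
  · intro z _
    unfold ch; dsimp only
    have h1 : HasDerivAt (fun z : ℝ => x.1 - (w1 + z * a)) (-a) z := by
      have := (((hasDerivAt_id z).mul_const a).const_add w1).const_sub x.1
      simpa using this
    have h2 := ((((h1.pow 2).add_const ((x.2.1 - w2) ^ 2)).const_add
      (x.2.2 ^ 2 + a ^ 2)).div_const (2 * x.2.2 * a))
    refine h2.congr_deriv ?_
    field_simp
    push_cast
    ring
  · intro z _
    unfold Ee; dsimp only
    exact hasDerivAt_const _ _
  · intro z hz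
    dsimp only
    set p : G := (w1 + z * a, w2, a) with hp
    have hpp : 0 < p.2.2 := ha
    have hd0 : 0 < hd x p := hs.trans_le (hfar z (hsub hz))
    have hS := Real.sinh_pos_iff.2 hd0
    apply bound_horiz hd0 (Ee_pos hx hpp) (by positivity)
    · rw [abs_div, abs_div, abs_neg, abs_of_pos hS, abs_of_pos hx, div_le_one hS]
      exact (horiz_le hx hpp).1
    · exact horiz_half hx hpp hd0 (le_add_of_nonneg_right (sq_nonneg _))
    · positivity

lemma seg_h2 {t s : ℝ} (ht : 0 < t) (hs : 0 < s) {x : G} (hx : 0 < x.2.2) (w1 w2 a : ℝ)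
    (ha : 0 < a) {lo hi u v : ℝ} (hu : u ∈ Icc lo hi) (hv : v ∈ Icc lo hi)
    (hfar : ∀ z ∈ Icc lo hi, s ≤ hd x (w1, w2 + z * a, a)) :
    ‖kk t x (w1, w2 + v * a, a) - kk t x (w1, w2 + u * a, a)‖ₑ ≤
      ENNReal.ofReal (226 * N0) * ∫⁻ z in Icc lo hi, Ker (Hgrad s) x (w1, w2 + z * a, a) := by
  wlog huv : u ≤ v generalizing u v
  · have := this hv hu (le_of_not_ge huv)
    rwa [← neg_sub, enorm_neg]
  have hsub : Icc u v ⊆ Icc lo hi := Icc_subset_Icc hu.1 hv.2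
  refine le_trans ?_ (mul_le_mul_right (lintegral_mono_set hsub) _)
  refine seg ht hs hx (fun z => (w1, w2 + z * a, a))
    (fun z => -(x.2.1 - (w2 + z * a)) / x.2.2) (fun z => 0) huv (fun z _ => ha)
    (fun z hz => hfar z (hsub hz)) (by unfold ch; dsimp only; fun_prop)
    (by unfold Ee; dsimp only; fun_prop) ?_ ?_ ?_
  · intro z _
    unfold ch; dsimp only
    have h1 : HasDerivAt (fun z : ℝ => x.2.1 - (w2 + z * a)) (-a) z := by
      have := (((hasDerivAt_id z).mul_const a).const_add w2).const_sub x.2.1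
      simpa using this
    have h2 := ((((h1.pow 2).const_add ((x.1 - w1) ^ 2)).const_add
      (x.2.2 ^ 2 + a ^ 2)).div_const (2 * x.2.2 * a))
    refine h2.congr_deriv ?_
    field_simp
    push_cast
    ring
  · intro z _
    unfold Ee; dsimp only
    exact hasDerivAt_const _ _
  · intro z hz
    dsimp only
    set p : G := (w1, w2 + z * a, a) with hp
    have hpp : 0 < p.2.2 := ha
    have hd0 : 0 < hd x p := hs.trans_le (hfar z (hsub hz))
    have hS := Real.sinh_pos_iff.2 hd0
    apply bound_horiz hd0 (Ee_pos hx hpp) (by positivity)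
    · rw [abs_div, abs_div, abs_neg, abs_of_pos hS, abs_of_pos hx, div_le_one hS]
      exact (horiz_le hx hpp).2
    · exact horiz_half hx hpp hd0 (le_add_of_nonneg_left (sq_nonneg _))
    · positivity

lemma inv_cov {e : ℝ} (he : 0 < e) (K : ℝ → ℝ≥0∞) :
    ∫⁻ a in Ioi (0:ℝ), ENNReal.ofReal a⁻¹ * K (e / a) =
      ∫⁻ b in Ioi (0:ℝ), ENNReal.ofReal b⁻¹ * K b := by
  have hder : ∀ s ∈ Ioi (0:ℝ), HasDerivWithinAt (fun a => e / a) (-e / s ^ 2) (Ioi 0) s := by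
    intro s hs
    have hs : 0 < s := hs
    have := ((hasDerivAt_inv hs.ne').const_mul e)
    refine HasDerivAt.hasDerivWithinAt (this.congr_deriv ?_)
    ring
  have hinj : InjOn (fun a => e / a) (Ioi 0) := by
    intro s hs t ht hst
    have hs : 0 < s := hs
    have ht : 0 < t := ht
    have hst : e / s = e / t := hst
    rw [div_eq_div_iff hs.ne' ht.ne'] at hst
    exact (mul_left_cancel₀ he.ne' hst).symm
  have him : (fun a => e / a) '' Ioi 0 = Ioi 0 := by
    ext b
    constructor
    · rintro ⟨a, ha, rfl⟩
      have ha : 0 < a := ha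
      show 0 < e / a
      positivity
    · intro hb
      have hb : 0 < b := hb
      exact ⟨e / b, show 0 < e / b by positivity, by field_simp⟩
  have := lintegral_image_eq_lintegral_abs_deriv_mul measurableSet_Ioi hder hinj
    (fun b => ENNReal.ofReal b⁻¹ * K b)
  rw [him] at this
  rw [this]
  apply setLIntegral_congr_fun measurableSet_Ioi
  intro a ha
  have ha : 0 < a := ha
  dsimp only
  rw [← mul_assoc, ← ENNReal.ofReal_mul (abs_nonneg _)]
  congr 2
  rw [abs_div, abs_neg, abs_of_pos he, abs_of_pos (by positivity)]
  field_simp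

lemma scale_cov {k : ℝ} (hk : 0 < k) (c1 c2 : ℝ) {F : ℝ × ℝ → ℝ≥0∞} (hF : Measurable F) :
    ∫⁻ q : ℝ × ℝ, F (c1 - k * q.1, c2 - k * q.2) = ENNReal.ofReal (k ^ 2)⁻¹ * ∫⁻ q, F q := by
  have h := Measure.map_addHaar_smul (volume : Measure (ℝ × ℝ)) hk.ne'
  have h1 : ∫⁻ q : ℝ × ℝ, F ((c1, c2) - q) ∂(Measure.map (k • ·) volume) =
      ∫⁻ q : ℝ × ℝ, F (c1 - k * q.1, c2 - k * q.2) := by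
    rw [lintegral_map (by fun_prop) (by fun_prop)]
    rfl
  rw [← h1, h, lintegral_smul_measure, lintegral_sub_left_eq_self]
  simp only [Module.finrank_prod, Module.finrank_self, smul_eq_mul]
  rw [abs_of_pos (by positivity)]

def Tm (x y : G) : G := gMul x (gInv y)

lemma measurable_Tm (x : G) : Measurable (Tm x) := by
  unfold Tm gMul gInv; fun_prop

lemma map_Tm {x : G} (hx : 0 < x.2.2) :
    Measure.map (Tm x) ρG = ρG.withDensity (fun w => ((w.2.2 ^ 2)⁻¹.toNNReal : ℝ≥0∞)) := by
  have hm : Measurable (fun w : G => ((w.2.2 ^ 2)⁻¹.toNNReal : ℝ≥0∞)) := by fun_prop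
  apply Measure.ext_of_lintegral
  intro f hf
  rw [lintegral_map hf (measurable_Tm x), lintegral_withDensity_eq_lintegral_mul _ hm hf,
    lintegral_rho (F := fun y => f (Tm x y)) (hf.comp (measurable_Tm x)), lintegral_rho (hm.mul hf)]
  have := inv_cov hx (fun b => ENNReal.ofReal (b ^ 2)⁻¹ * ∫⁻ q : ℝ × ℝ, f (q.1, q.2, b))
  trans ∫⁻ a in Ioi (0:ℝ), ENNReal.ofReal a⁻¹ * (ENNReal.ofReal ((x.2.2 / a) ^ 2)⁻¹ *
      ∫⁻ q : ℝ × ℝ, f (q.1, q.2, x.2.2 / a))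
  · apply setLIntegral_congr_fun measurableSet_Ioi
    intro a ha
    have ha : 0 < a := ha
    dsimp only
    congr 1
    rw [← scale_cov (k := x.2.2 / a) (by positivity) x.1 x.2.1
      (F := fun q => f (q.1, q.2, x.2.2 / a)) (by fun_prop)]
    apply lintegral_congr
    intro q
    unfold Tm gMul gInv
    dsimp only
    congr 3
    · ring
    · ring
    · ring
  · rw [this]
    apply setLIntegral_congr_fun measurableSet_Ioi
    intro a ha
    dsimp only
    congr 1
    rw [← lintegral_const_mul _ (by fun_prop)]
    rfl

lemma measurable_kk (t : ℝ) (x : G) : Measurable (kk t x) := by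
  have m1 : Measurable (fun w => hd x w) := measurable_hd' measurable_const measurable_id
  have m2 : Measurable (fun w => Ee x w) := measurable_Ee' measurable_const measurable_id
  have m3 : Measurable (fun w => if hd x w = 0 then 1 else hd x w / Real.sinh (hd x w)) := by
    apply Measurable.ite
    · exact m1 (measurableSet_singleton 0)
    · fun_prop
    · fun_prop
  unfold kk
  fun_prop

lemma rho_pos : ∀ᵐ w ∂ρG, 0 < w.2.2 := by
  have hms : MeasurableSet {w : G | ¬ 0 < w.2.2} :=
    (measurableSet_lt measurable_const (measurable_snd.comp measurable_snd)).compl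
  rw [ae_iff, ← lintegral_indicator_one hms, lintegral_rho (measurable_one.indicator hms),
    setLIntegral_congr_fun (g := fun _ => 0) measurableSet_Ioi]
  · simp
  · intro a ha
    have ha : 0 < a := ha
    simp [indicator, ha]

lemma heatK_eq {t : ℝ} {x y : G} (hx : 0 < x.2.2) (hy : 0 < y.2.2) :
    heatK t y = (Tm x y).2.2 ^ 2 * kk t x (Tm x y) := by
  have h1 : coshArg y = ch x (Tm x y) := by
    unfold coshArg ch Tm gMul gInv
    dsimp only
    field_simp
    ring
  have h2 : rG y = hd x (Tm x y) := by
    unfold hd; rw [← h1]; rfl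
  have h3 : Real.sqrt (deltaG y) = (Tm x y).2.2 ^ 2 * Ee x (Tm x y) := by
    have : (Tm x y).2.2 ^ 2 * Ee x (Tm x y) = (y.2.2)⁻¹ := by
      unfold Ee Tm gMul gInv; dsimp only; field_simp
    rw [this]
    unfold deltaG
    rw [← inv_pow, Real.sqrt_sq (by positivity)]
  unfold heatK kk
  rw [h2, h3]
  unfold N0
  ring

lemma conv_eq {A : G → ℝ} (hA : AEStronglyMeasurable A ρG) {t : ℝ} {x : G} (hx : 0 < x.2.2) :
    convHeat A t x = ∫ w, A w * kk t x w ∂ρG := by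
  have hk := measurable_kk t x
  have e1 : convHeat A t x =
      ∫ y, (fun w => A w * (w.2.2 ^ 2 * kk t x w)) (Tm x y) ∂ρG := by
    unfold convHeat
    apply integral_congr_ae
    filter_upwards [rho_pos] with y hy
    rw [heatK_eq hx hy]; rfl
  have hnn : Measurable (fun w : G => (w.2.2 ^ 2)⁻¹.toNNReal) := by fun_prop
  rw [e1, ← integral_map (f := fun w => A w * (w.2.2 ^ 2 * kk t x w))
    (measurable_Tm x).aemeasurable, map_Tm hx, integral_withDensity_eq_integral_smul hnn]
  · apply integral_congr_ae
    filter_upwards [rho_pos] with w hw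
    rw [NNReal.smul_def, Real.coe_toNNReal _ (by positivity), smul_eq_mul]
    field_simp
  · rw [map_Tm hx]
    have h1 : AEStronglyMeasurable (fun w => A w * (w.2.2 ^ 2 * kk t x w)) ρG :=
      hA.mul (by fun_prop : Measurable fun w : G => w.2.2 ^ 2 * kk t x w).aestronglyMeasurable
    exact h1.mono_ac (withDensity_absolutelyContinuous _ _)

lemma lint_inv {c s : ℝ} (hc : 0 < c) (hs : 0 < s) :
    ∫⁻ a in Icc (c * Real.exp (-s)) (c * Real.exp s), ENNReal.ofReal a⁻¹ = ENNReal.ofReal (2 * s) := by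
  have h1 : 0 < c * Real.exp (-s) := by positivity
  have h2 : 0 < c * Real.exp s := by positivity
  have hle : c * Real.exp (-s) ≤ c * Real.exp s := by
    gcongr; linarith
  rw [← ofReal_integral_eq_lintegral_ofReal]
  · rw [integral_Icc_eq_integral_Ioc, ← intervalIntegral.integral_of_le hle,
      integral_inv_of_pos h1 h2]
    congr 1
    rw [mul_div_mul_left _ _ hc.ne', ← Real.exp_sub, Real.log_exp]; ring
  · apply ContinuousOn.integrableOn_Icc
    intro a ha
    exact (continuousAt_inv₀ (ne_of_gt (h1.trans_le ha.1))).continuousWithinAt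
  · filter_upwards [ae_restrict_mem measurableSet_Icc] with a ha
    exact (inv_pos.2 (h1.trans_le ha.1)).le

lemma rho_box {c s : ℝ} (hc : 0 < c) (hs : 0 < s) (l1 u1 l2 u2 : ℝ) :
    ρG (Icc l1 u1 ×ˢ (Icc l2 u2 ×ˢ Icc (c * Real.exp (-s)) (c * Real.exp s))) =
      ENNReal.ofReal (2 * s) * (ENNReal.ofReal (u1 - l1) * ENNReal.ofReal (u2 - l2)) := by
  have hms : MeasurableSet (Icc l1 u1 ×ˢ (Icc l2 u2 ×ˢ Icc (c * Real.exp (-s)) (c * Real.exp s))) :=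
    measurableSet_Icc.prod (measurableSet_Icc.prod measurableSet_Icc)
  rw [← lintegral_indicator_one hms, lintegral_rho (measurable_one.indicator hms)]
  have e : ∀ a : ℝ, ∫⁻ q : ℝ × ℝ, (Icc l1 u1 ×ˢ (Icc l2 u2 ×ˢ Icc (c * Real.exp (-s))
      (c * Real.exp s))).indicator (1 : G → ℝ≥0∞) (q.1, q.2, a) =
      (Icc (c * Real.exp (-s)) (c * Real.exp s)).indicator
        (fun _ => (ENNReal.ofReal (u1 - l1) * ENNReal.ofReal (u2 - l2))) a := by
    intro a
    by_cases ha : a ∈ Icc (c * Real.exp (-s)) (c * Real.exp s)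
    · rw [indicator_of_mem ha]
      have : ∀ q : ℝ × ℝ, (Icc l1 u1 ×ˢ (Icc l2 u2 ×ˢ Icc (c * Real.exp (-s))
        (c * Real.exp s))).indicator (1 : G → ℝ≥0∞) (q.1, q.2, a) =
          (Icc l1 u1 ×ˢ Icc l2 u2).indicator 1 q := by
        intro q
        have hiff : ((q.1, q.2, a) : G) ∈ (Icc l1 u1 ×ˢ (Icc l2 u2 ×ˢ Icc (c * Real.exp (-s))
          (c * Real.exp s))) ↔ q ∈ Icc l1 u1 ×ˢ Icc l2 u2 := by
          simp only [mem_prod]; tauto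
        by_cases hq : q ∈ Icc l1 u1 ×ˢ Icc l2 u2
        · rw [indicator_of_mem hq, indicator_of_mem (hiff.2 hq)]; rfl
        · rw [indicator_of_notMem hq, indicator_of_notMem (fun h => hq (hiff.1 h))]
      simp_rw [this]
      rw [lintegral_indicator_one (measurableSet_Icc.prod measurableSet_Icc),
        Measure.volume_eq_prod, Measure.prod_prod, Real.volume_Icc, Real.volume_Icc]
    · rw [indicator_of_notMem ha]
      have : ∀ q : ℝ × ℝ, (Icc l1 u1 ×ˢ (Icc l2 u2 ×ˢ Icc (c * Real.exp (-s))
        (c * Real.exp s))).indicator (1 : G → ℝ≥0∞) (q.1, q.2, a) = 0 := by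
        intro q
        apply indicator_of_notMem
        simp only [mem_prod]; tauto
      rw [lintegral_congr this, lintegral_zero]
  simp_rw [e]
  have e2 : ∀ a : ℝ, ENNReal.ofReal a⁻¹ * (Icc (c * Real.exp (-s)) (c * Real.exp s)).indicator
        (fun _ => (ENNReal.ofReal (u1 - l1) * ENNReal.ofReal (u2 - l2))) a =
      (Icc (c * Real.exp (-s)) (c * Real.exp s)).indicator
        (fun a => ENNReal.ofReal a⁻¹ * (ENNReal.ofReal (u1 - l1) * ENNReal.ofReal (u2 - l2))) a := by
    intro a
    by_cases ha : a ∈ Icc (c * Real.exp (-s)) (c * Real.exp s)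
    · simp only [indicator_of_mem ha]
    · simp only [indicator_of_notMem ha, mul_zero]
  simp_rw [e2]
  rw [setLIntegral_indicator measurableSet_Icc]
  have : Icc (c * Real.exp (-s)) (c * Real.exp s) ∩ Ioi 0 =
      Icc (c * Real.exp (-s)) (c * Real.exp s) := by
    apply inter_eq_left.2
    intro a ha
    exact (show 0 < c * Real.exp (-s) by positivity).trans_le ha.1
  rw [this, lintegral_mul_const _ (by fun_prop), lint_inv hc hs]

/-- Data of a CZ set. -/
def bx (c : G) (L r : ℝ) : Set G :=
  Set.Icc (c.1 - L/2) (c.1 + L/2) ×ˢ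
        (Set.Icc (c.2.1 - L/2) (c.2.1 + L/2) ×ˢ
         Set.Icc (c.2.2 * Real.exp (-r)) (c.2.2 * Real.exp r))

def CZc (c : G) (L r : ℝ) : Prop := 0 < c.2.2 ∧ 0 < L ∧ 0 < r ∧
    (r < 1 → Real.exp 2 * c.2.2 * r ≤ L ∧ L < Real.exp 8 * c.2.2 * r) ∧
    (1 ≤ r → c.2.2 * Real.exp (2*r) ≤ L ∧ L < c.2.2 * Real.exp (8*r))

lemma measurableSet_bx (c : G) (L r : ℝ) : MeasurableSet (bx c L r) :=
  measurableSet_Icc.prod (measurableSet_Icc.prod measurableSet_Icc)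

lemma rho_bx {c : G} {L r : ℝ} (h : CZc c L r) :
    ρG (bx c L r) = ENNReal.ofReal (2 * r * L ^ 2) := by
  unfold bx
  obtain ⟨hc, hL, hr, -⟩ := h
  rw [rho_box hc hr, ← ENNReal.ofReal_mul (by linarith), ← ENNReal.ofReal_mul (by linarith)]
  congr 1; ring

lemma rho_bx2 {c : G} {L r : ℝ} (h : CZc c L r) :
    ρG (bx c (2 * L) (2 * r)) = 8 * ρG (bx c L r) := by
  rw [rho_bx h]
  unfold bx
  obtain ⟨hc, hL, hr, -⟩ := h
  rw [rho_box hc (by linarith), ← ENNReal.ofReal_mul (by linarith), ← ENNReal.ofReal_mul (by linarith)]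
  rw [show (8 : ℝ≥0∞) = ENNReal.ofReal 8 by simp, ← ENNReal.ofReal_mul (by norm_num)]
  congr 1; ring

lemma bx_pos {c : G} {L r : ℝ} (h : CZc c L r) {w : G} (hw : w ∈ bx c L r) : 0 < w.2.2 := by
  have := hw.2.2.1
  have hc := h.1
  exact lt_of_lt_of_le (by positivity) this

/-- separation -/
lemma sep {c : G} {L r : ℝ} (h : CZc c L r) {x w : G} (hx : 0 < x.2.2) (hw : w ∈ bx c L r)
    (hxn : x ∉ bx c (2 * L) (2 * r)) : r / 4 ≤ hd x w := by
  have hwp := bx_pos h hw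
  obtain ⟨hc, hL, hr, h1, h2⟩ := h
  obtain ⟨⟨w1, w1'⟩, ⟨w2, w2'⟩, ⟨w3, w3'⟩⟩ := hw
  by_cases hv : x.2.2 ∈ Icc (c.2.2 * Real.exp (-(2 * r))) (c.2.2 * Real.exp (2 * r))
  · have hs : L ^ 2 / 4 ≤ (x.1 - w.1) ^ 2 + (x.2.1 - w.2.1) ^ 2 := by
      have : ¬ (x.1 ∈ Icc (c.1 - 2 * L / 2) (c.1 + 2 * L / 2) ∧
          x.2.1 ∈ Icc (c.2.1 - 2 * L / 2) (c.2.1 + 2 * L / 2)) := by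
        intro hh
        exact hxn ⟨hh.1, hh.2, hv⟩
      by_contra hcon
      push Not at hcon
      apply this
      have a1 : |x.1 - w.1| ≤ L / 2 := by
        apply abs_le_of_sq_le_sq _ (by linarith)
        nlinarith [sq_nonneg (x.2.1 - w.2.1)]
      have a2 : |x.2.1 - w.2.1| ≤ L / 2 := by
        apply abs_le_of_sq_le_sq _ (by linarith)
        nlinarith [sq_nonneg (x.1 - w.1)]
      rw [abs_le] at a1 a2
      refine ⟨⟨?_, ?_⟩, ⟨?_, ?_⟩⟩ <;> linarith [a1.1, a1.2, a2.1, a2.2]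
    have hch : 1 + L ^ 2 / (8 * c.2.2 ^ 2 * Real.exp (3 * r)) ≤ ch x w := by
      have e : ch x w = 1 + ((x.2.2 - w.2.2) ^ 2 + ((x.1 - w.1) ^ 2 + (x.2.1 - w.2.1) ^ 2)) /
          (2 * x.2.2 * w.2.2) := by unfold ch; field_simp; ring
      rw [e]
      have hden : 2 * x.2.2 * w.2.2 ≤ 2 * c.2.2 ^ 2 * Real.exp (3 * r) := by
        calc _ ≤ 2 * (c.2.2 * Real.exp (2 * r)) * (c.2.2 * Real.exp r) := by
              gcongr; exact hv.2
          _ = 2 * c.2.2 ^ 2 * (Real.exp (2 * r) * Real.exp r) := by ring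
          _ = _ := by rw [← Real.exp_add]; ring_nf
      have : L ^ 2 / (8 * c.2.2 ^ 2 * Real.exp (3 * r)) =
        (L ^ 2 / 4) / (2 * c.2.2 ^ 2 * Real.exp (3 * r)) := by field_simp; norm_num
      rw [this]
      gcongr
      nlinarith [sq_nonneg (x.2.2 - w.2.2)]
    apply le_hd_of_le_ch hx hwp (by linarith)
    refine le_trans ?_ hch
    rcases lt_or_ge r 1 with hr1 | hr1
    · have hL1 := (h1 hr1).1
      have b1 : Real.cosh (r / 4) ≤ 1 + r ^ 2 / 16 := by
        refine (Real.cosh_le_exp_half_sq _).trans ?_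
        have hh : |(r / 4) ^ 2 / 2| ≤ 1 := by
          rw [abs_of_nonneg (by positivity)]; nlinarith
        have := Real.abs_exp_sub_one_le hh
        rw [abs_of_nonneg (by positivity : 0 ≤ (r / 4) ^ 2 / 2)] at this
        have := (abs_le.1 this).2
        linarith
      refine b1.trans ?_
      have : r ^ 2 / 16 ≤ L ^ 2 / (8 * c.2.2 ^ 2 * Real.exp (3 * r)) := by
        rw [le_div_iff₀ (by positivity)]
        have q1 : (Real.exp 2 * c.2.2 * r) ^ 2 ≤ L ^ 2 := by gcongr
        have q2 : (Real.exp 2) ^ 2 = Real.exp 4 := by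
          rw [← Real.exp_nat_mul]; norm_num
        have q3 : Real.exp (3 * r) ≤ Real.exp 4 := by
          apply Real.exp_le_exp.2; linarith
        calc r ^ 2 / 16 * (8 * c.2.2 ^ 2 * Real.exp (3 * r))
            ≤ r ^ 2 / 16 * (8 * c.2.2 ^ 2 * Real.exp 4) := by gcongr
          _ = (Real.exp 2 * c.2.2 * r) ^ 2 / 2 := by rw [← q2]; ring
          _ ≤ L ^ 2 := by nlinarith [sq_nonneg L]
      linarith
    · have hL1 := (h2 hr1).1
      have b1 : Real.cosh (r / 4) ≤ 1 + Real.exp r / 8 := by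
        have q1 : Real.exp (r / 4) ^ 4 = Real.exp r := by
          rw [← Real.exp_nat_mul]; congr 1; push_cast; ring
        have q2 : 1 ≤ Real.exp (r / 4) := Real.one_le_exp (by linarith)
        have q3 : Real.exp (-(r / 4)) ≤ 1 := Real.exp_le_one_iff.2 (by linarith)
        rw [Real.cosh_eq, ← q1]
        nlinarith [sq_nonneg (Real.exp (r / 4) ^ 2 - 1), sq_nonneg (Real.exp (r / 4) - 1)]
      refine b1.trans ?_
      have : Real.exp r / 8 ≤ L ^ 2 / (8 * c.2.2 ^ 2 * Real.exp (3 * r)) := by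
        rw [le_div_iff₀ (by positivity)]
        calc Real.exp r / 8 * (8 * c.2.2 ^ 2 * Real.exp (3 * r))
            = c.2.2 ^ 2 * (Real.exp r * Real.exp (3 * r)) := by ring
          _ = c.2.2 ^ 2 * (Real.exp (2 * r) * Real.exp (2 * r)) := by
              rw [← Real.exp_add, ← Real.exp_add]; ring_nf
          _ = (c.2.2 * Real.exp (2 * r)) ^ 2 := by ring
          _ ≤ L ^ 2 := by gcongr
      linarith
  · suffices r ≤ hd x w by linarith
    apply le_hd_of_le_ch hx hwp hr.le
    unfold ch
    rw [le_div_iff₀ (by positivity), Real.cosh_eq]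
    have hq : 1 ≤ Real.exp r := Real.one_le_exp hr.le
    have hqi : Real.exp (-r) * Real.exp r = 1 := by rw [← Real.exp_add]; simp
    have hqi1 : Real.exp (-r) ≤ 1 := Real.exp_le_one_iff.2 (by linarith)
    have e2 : Real.exp (2 * r) = Real.exp r * Real.exp r := by rw [← Real.exp_add]; ring_nf
    have e3 : Real.exp (-(2 * r)) = Real.exp (-r) * Real.exp (-r) := by
      rw [← Real.exp_add]; ring_nf
    rw [e2, e3] at hv
    set q := Real.exp r with hqd
    set qi := Real.exp (-r) with hqid
    have hqip : 0 < qi := Real.exp_pos _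
    have key : 0 ≤ (x.2.2 - q * w.2.2) * (x.2.2 - qi * w.2.2) := by
      rw [mem_Icc, not_and_or] at hv
      rcases hv with hv | hv
      · push Not at hv
        have : x.2.2 ≤ qi * w.2.2 := by
          calc x.2.2 ≤ qi * (c.2.2 * qi) := by linarith
            _ ≤ _ := by gcongr
        have h3 : qi * w.2.2 ≤ q * w.2.2 := by gcongr; linarith
        apply mul_nonneg_of_nonpos_of_nonpos <;> linarith
      · push Not at hv
        have : q * w.2.2 ≤ x.2.2 := by
          calc q * w.2.2 ≤ q * (c.2.2 * q) := by gcongr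
            _ ≤ _ := by linarith
        have h3 : qi * w.2.2 ≤ q * w.2.2 := by gcongr; linarith
        apply mul_nonneg <;> linarith
    have e4 : (x.2.2 - q * w.2.2) * (x.2.2 - qi * w.2.2) =
      x.2.2 ^ 2 + w.2.2 ^ 2 * (qi * q) - (q + qi) * x.2.2 * w.2.2 := by ring
    rw [e4, hqi] at key
    nlinarith [sq_nonneg (x.1 - w.1), sq_nonneg (x.2.1 - w.2.1)]

def E8 : ℝ := Real.exp 8

lemma E8_pos : 0 < E8 := Real.exp_pos 8

lemma horiz_len {c : G} {L r : ℝ} (h : CZc c L r) : L ≤ E8 * r * (c.2.2 * Real.exp (8 * r)) := by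
  obtain ⟨hc, hL, hr, h1, h2⟩ := h
  rcases lt_or_ge r 1 with hr1 | hr1
  · have := (h1 hr1).2
    have h3 : 1 ≤ Real.exp (8 * r) := Real.one_le_exp (by linarith)
    calc L ≤ E8 * r * (c.2.2 * 1) := by unfold E8; linarith
      _ ≤ _ := by have := E8_pos; gcongr
  · have := (h2 hr1).2
    have h3 : 1 ≤ E8 := Real.one_le_exp (by norm_num)
    calc L ≤ 1 * 1 * (c.2.2 * Real.exp (8 * r)) := by linarith
      _ ≤ _ := by gcongr

/-- the four path pieces -/
def P1f (c : G) (_r : ℝ) (y : G × ℝ) : G := (c.1, c.2.1, c.2.2 * Real.exp y.2)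
def P2f (c : G) (r : ℝ) (y : G × ℝ) : G :=
  (c.1 + y.2 * (c.2.2 * Real.exp (8 * r)), c.2.1, c.2.2 * Real.exp (8 * r))
def P3f (c : G) (r : ℝ) (y : G × ℝ) : G :=
  (y.1.1, c.2.1 + y.2 * (c.2.2 * Real.exp (8 * r)), c.2.2 * Real.exp (8 * r))
def P4f (c : G) (_r : ℝ) (y : G × ℝ) : G := (y.1.1, y.1.2.1, c.2.2 * Real.exp y.2)

lemma mP1 (c : G) (r : ℝ) : Measurable (P1f c r) := by unfold P1f; fun_prop
lemma mP2 (c : G) (r : ℝ) : Measurable (P2f c r) := by unfold P2f; fun_prop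
lemma mP3 (c : G) (r : ℝ) : Measurable (P3f c r) := by unfold P3f; fun_prop
lemma mP4 (c : G) (r : ℝ) : Measurable (P4f c r) := by unfold P4f; fun_prop

lemma step_v {x : G} (hx : 0 < x.2.2) (w1 w2 a : ℝ) (ha : 0 < a) (u v : ℝ) {l : ℝ}
    (hl : |u - v| ≤ l) :
    hd x (w1, w2, a * Real.exp u) ≤ hd x (w1, w2, a * Real.exp v) + l := by
  have := hd_vert (w := (w1, w2, a * Real.exp v)) hx (by dsimp only; positivity) (u - v)
  dsimp only at this
  rw [mul_assoc, ← Real.exp_add, add_sub_cancel] at this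
  linarith

lemma step_1 {x : G} (hx : 0 < x.2.2) (w1 w2 a : ℝ) (ha : 0 < a) (u v : ℝ) {l : ℝ}
    (hl : |u - v| ≤ l) :
    hd x (w1 + u * a, w2, a) ≤ hd x (w1 + v * a, w2, a) + 2 * l := by
  have := hd_horiz1 (w := (w1 + v * a, w2, a)) hx ha (u - v)
  dsimp only at this
  rw [show w1 + v * a + (u - v) * a = w1 + u * a by ring] at this
  linarith

lemma step_2 {x : G} (hx : 0 < x.2.2) (w1 w2 a : ℝ) (ha : 0 < a) (u v : ℝ) {l : ℝ}
    (hl : |u - v| ≤ l) :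
    hd x (w1, w2 + u * a, a) ≤ hd x (w1, w2 + v * a, a) + 2 * l := by
  have := hd_horiz2 (w := (w1, w2 + v * a, a)) hx ha (u - v)
  dsimp only at this
  rw [show w2 + v * a + (u - v) * a = w2 + u * a by ring] at this
  linarith

lemma path_data {c : G} {L r : ℝ} (h : CZc c L r) {w : G} (hw : w ∈ bx c L r) :
    ∃ u1 u2 v : ℝ, |u1| ≤ E8 * r ∧ |u2| ≤ E8 * r ∧ |v| ≤ r ∧
      w = (c.1 + u1 * (c.2.2 * Real.exp (8 * r)), c.2.1 + u2 * (c.2.2 * Real.exp (8 * r)),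
        c.2.2 * Real.exp v) := by
  have hl := horiz_len h
  have hwp := bx_pos h hw
  obtain ⟨hc, hL, hr, -⟩ := h
  obtain ⟨⟨w1, w1'⟩, ⟨w2, w2'⟩, ⟨w3, w3'⟩⟩ := hw
  set H := c.2.2 * Real.exp (8 * r) with hH
  have hHp : 0 < H := by positivity
  have hv : c.2.2 * Real.exp (Real.log (w.2.2 / c.2.2)) = w.2.2 := by
    rw [Real.exp_log (by positivity)]; field_simp
  refine ⟨(w.1 - c.1) / H, (w.2.1 - c.2.1) / H, Real.log (w.2.2 / c.2.2), ?_, ?_, ?_, ?_⟩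
  · rw [abs_div, abs_of_pos hHp, div_le_iff₀ hHp]
    refine le_trans ?_ hl
    rw [abs_le]; constructor <;> linarith
  · rw [abs_div, abs_of_pos hHp, div_le_iff₀ hHp]
    refine le_trans ?_ hl
    rw [abs_le]; constructor <;> linarith
  · rw [abs_le]
    constructor
    · rw [Real.le_log_iff_exp_le (by positivity), le_div_iff₀ hc]; linarith
    · rw [Real.log_le_iff_le_exp (by positivity), div_le_iff₀ hc]; linarith
  · rw [hv, div_mul_cancel₀ _ hHp.ne', div_mul_cancel₀ _ hHp.ne']
    simp

def KK : ℝ := 18 + 4 * E8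

lemma hd_upper {c : G} {L r : ℝ} (h : CZc c L r) {x w : G} (hx : 0 < x.2.2) (hw : w ∈ bx c L r)
    (hxc : hd x c ≤ KK * r) : hd x w ≤ (KK + 17 + 4 * E8) * r := by
  obtain ⟨u1, u2, v, h1, h2, h3, rfl⟩ := path_data h hw
  obtain ⟨hc, hL, hr, -⟩ := h
  set H := c.2.2 * Real.exp (8 * r) with hH
  have hHp : 0 < H := by positivity
  have hv := abs_le.1 h3
  have a1 := step_v hx (c.1 + u1 * H) (c.2.1 + u2 * H) c.2.2 hc v (8 * r) (l := 9 * r)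
    (by rw [abs_le]; constructor <;> linarith)
  have a2 := step_2 hx (c.1 + u1 * H) c.2.1 H hHp u2 0 (l := E8 * r) (by simpa using h2)
  have a3 := step_1 hx c.1 c.2.1 H hHp u1 0 (l := E8 * r) (by simpa using h1)
  have a4 := step_v hx c.1 c.2.1 c.2.2 hc (8 * r) 0 (l := 8 * r)
    (by rw [abs_le]; constructor <;> linarith)
  rw [← hH] at a1 a4
  simp only [zero_mul, add_zero, Real.exp_zero, mul_one, Prod.mk.eta] at a1 a2 a3 a4
  linarith

lemma far {c : G} {L r : ℝ} (h : CZc c L r) {x w : G} (hx : 0 < x.2.2) (hw : w ∈ bx c L r)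
    (hxc : KK * r ≤ hd x c) {t : ℝ} (ht : 0 < t) :
    ‖kk t x w - kk t x c‖ₑ ≤
      ENNReal.ofReal (226 * N0) * (∫⁻ z in Icc (-(E8 * r)) (E8 * r), Ker (Hgrad r) x (P2f c r (w, z)))
      + ENNReal.ofReal (226 * N0) * (∫⁻ z in Icc (-(E8 * r)) (E8 * r), Ker (Hgrad r) x (P3f c r (w, z)))
      + ENNReal.ofReal (226 * N0) * (∫⁻ z in Icc (-r) (8 * r), Ker (Hgrad r) x (P1f c r (w, z)))
      + ENNReal.ofReal (226 * N0) * (∫⁻ z in Icc (-r) (8 * r), Ker (Hgrad r) x (P4f c r (w, z))) := by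
  obtain ⟨u1, u2, v, h1, h2, h3, hwe⟩ := path_data h hw
  obtain ⟨hc, hL, hr, -⟩ := h
  set H := c.2.2 * Real.exp (8 * r) with hH
  have hHp : 0 < H := by positivity
  have hw1 : w.1 = c.1 + u1 * H := by rw [hwe]
  have hw2 : w.2.1 = c.2.1 + u2 * H := by rw [hwe]
  have hv := abs_le.1 h3
  have hE := E8_pos
  have hK : KK = 18 + 4 * E8 := rfl
  have hEr : 0 < E8 * r := by positivity
  have h1' := abs_le.1 h1
  have h2' := abs_le.1 h2
  -- distances
  have f1 : ∀ z ∈ Icc (-r) (8 * r), r ≤ hd x (c.1, c.2.1, c.2.2 * Real.exp z) := by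
    intro z hz
    have a4 := step_v hx c.1 c.2.1 c.2.2 hc 0 z (l := 8 * r)
      (by rw [abs_le]; constructor <;> linarith [hz.1, hz.2])
    simp only [Real.exp_zero, mul_one, Prod.mk.eta] at a4
    nlinarith
  have g1 : KK * r - 8 * r ≤ hd x (c.1, c.2.1, H) := by
    have a4 := step_v hx c.1 c.2.1 c.2.2 hc 0 (8 * r) (l := 8 * r)
      (by rw [abs_le]; constructor <;> linarith)
    simp only [Real.exp_zero, mul_one, Prod.mk.eta] at a4
    rw [hH]; linarith
  have g2 : ∀ z ∈ Icc (-(E8 * r)) (E8 * r), KK * r - 8 * r - 2 * (E8 * r) ≤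
      hd x (c.1 + z * H, c.2.1, H) := by
    intro z hz
    have a := step_1 hx c.1 c.2.1 H hHp 0 z (l := E8 * r)
      (by rw [abs_le]; constructor <;> linarith [hz.1, hz.2])
    simp only [zero_mul, add_zero] at a
    linarith
  have f2 : ∀ z ∈ Icc (-(E8 * r)) (E8 * r), r ≤ hd x (c.1 + z * H, c.2.1, H) := by
    intro z hz
    have := g2 z hz
    rw [hK] at this; linarith
  have g3 : ∀ z ∈ Icc (-(E8 * r)) (E8 * r), KK * r - 8 * r - 4 * (E8 * r) ≤
      hd x (w.1, c.2.1 + z * H, H) := by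
    intro z hz
    have a := step_2 hx (c.1 + u1 * H) c.2.1 H hHp 0 z (l := E8 * r)
      (by rw [abs_le]; constructor <;> linarith [hz.1, hz.2])
    have b := g2 u1 h1'
    simp only [zero_mul, add_zero] at a
    rw [hw1]
    linarith
  have f3 : ∀ z ∈ Icc (-(E8 * r)) (E8 * r), r ≤ hd x (w.1, c.2.1 + z * H, H) := by
    intro z hz
    have := g3 z hz
    rw [hK] at this; linarith
  have f4 : ∀ z ∈ Icc (-r) (8 * r), r ≤ hd x (w.1, w.2.1, c.2.2 * Real.exp z) := by
    intro z hz
    have a := step_v hx w.1 w.2.1 c.2.2 hc (8 * r) z (l := 9 * r)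
      (by rw [abs_le]; constructor <;> linarith [hz.1, hz.2])
    have b := g3 u2 h2'
    rw [← hH] at a
    rw [← hw2] at b
    rw [hK] at b; linarith
  have z0 : (0:ℝ) ∈ Icc (-(E8 * r)) (E8 * r) := ⟨by linarith, by linarith⟩
  have s1 := seg_vert ht hr hx c.1 c.2.1 c.2.2 hc (u := 0) (v := 8 * r)
    ⟨by linarith, by linarith⟩ ⟨by linarith, by linarith⟩ f1
  have s2 := seg_h1 ht hr hx c.1 c.2.1 H hHp z0 h1' f2
  have s3 := seg_h2 ht hr hx w.1 c.2.1 H hHp z0 h2' f3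
  have s4 := seg_vert ht hr hx w.1 w.2.1 c.2.2 hc (u := 8 * r) (v := v)
    ⟨by linarith, by linarith⟩ ⟨by linarith, by linarith⟩ f4
  have hwe' : (w.1, w.2.1, c.2.2 * Real.exp v) = w := by
    have : w.2.2 = c.2.2 * Real.exp v := by rw [hwe]
    rw [← this]
  rw [← hH] at s1 s4
  rw [hwe'] at s4
  rw [← hw2] at s3
  rw [← hw1] at s2
  simp only [zero_mul, add_zero, Real.exp_zero, mul_one, Prod.mk.eta] at s1 s2 s3
  have e : kk t x w - kk t x c = (kk t x (w.1, c.2.1, H) - kk t x (c.1, c.2.1, H))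
    + (kk t x (w.1, w.2.1, H) - kk t x (w.1, c.2.1, H))
    + (kk t x (c.1, c.2.1, H) - kk t x c) + (kk t x w - kk t x (w.1, w.2.1, H)) := by ring
  rw [e]
  refine (enorm_add_le _ _).trans (add_le_add ((enorm_add_le _ _).trans
    (add_le_add ((enorm_add_le _ _).trans (add_le_add ?_ ?_)) ?_)) ?_)
  · exact s2
  · exact s3
  · exact s1
  · exact s4

lemma meas_J {Θ : ℝ → ℝ → ℝ≥0∞} (hΘ : Measurable (Function.uncurry Θ)) {Y : Type*}
    [MeasurableSpace Y] (ν : Measure Y) [SFinite ν] {P : Y → G} (hP : Measurable P) :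
    Measurable fun x => ∫⁻ y, Ker Θ x (P y) ∂ν :=
  Measurable.lintegral_prod_right' (f := fun q : G × Y => Ker Θ q.1 (P q.2))
    (measurable_Ker hΘ measurable_fst (hP.comp measurable_snd))

lemma schur_path {r lo hi l : ℝ} (hr : 0 < r) (hl : hi - lo = l * r) (R : Set G) {P : G × ℝ → G}
    (hP : Measurable P) (hpos : ∀ y, 0 < (P y).2.2) :
    ∫⁻ x, ∫⁻ y, Ker (Hgrad r) x (P y) ∂((ρG.restrict R).prod (volume.restrict (Icc lo hi))) ∂ρG
      ≤ ENNReal.ofReal (16 * π * l) * ρG R := by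
  refine (schur (measurable_Hgrad r) (fun p hp => Ker_grad hr p hp) _ hP
    (Eventually.of_forall hpos)).trans ?_
  rw [← univ_prod_univ, Measure.prod_prod]
  simp only [Measure.restrict_apply_univ, Real.volume_Icc]
  rw [hl, mul_comm (ρG R), ← mul_assoc, ← ENNReal.ofReal_mul (by positivity)]
  apply le_of_eq
  congr 2
  field_simp
  norm_num
  ring

lemma conv_le {A : G → ℝ} (hA : AEStronglyMeasurable A ρG) {R : Set G} (hR : MeasurableSet R)
    (h0 : ∀ x ∉ R, A x = 0) (hN : eLpNorm A ⊤ ρG ≤ (ρG R)⁻¹) (F : G → ℝ) :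
    ∫⁻ w, ‖A w * F w‖ₑ ∂ρG ≤ ∫⁻ w in R, (ρG R)⁻¹ * ‖F w‖ₑ ∂ρG := by
  rw [← lintegral_indicator hR]
  apply lintegral_mono_ae
  have hae : ∀ᵐ w ∂ρG, ‖A w‖ₑ ≤ (ρG R)⁻¹ := by
    rw [eLpNorm_exponent_top] at hN
    filter_upwards [ae_le_eLpNormEssSup (f := A) (μ := ρG)] with w hw using hw.trans hN
  filter_upwards [hae] with w hw
  by_cases hwR : w ∈ R
  · rw [indicator_of_mem hwR, enorm_mul]
    gcongr
  · rw [h0 w hwR]; simp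

lemma conv_le1 {A : G → ℝ} (hA : AEStronglyMeasurable A ρG) {R : Set G} (hR : MeasurableSet R)
    (h0 : ∀ x ∉ R, A x = 0) (hN : eLpNorm A ⊤ ρG ≤ (ρG R)⁻¹) {x : G} (hx : 0 < x.2.2) (t : ℝ) :
    ENNReal.ofReal |convHeat A t x| ≤ ∫⁻ w in R, (ρG R)⁻¹ * ‖kk t x w‖ₑ ∂ρG := by
  rw [conv_eq hA hx, ← Real.norm_eq_abs, ofReal_norm]
  exact (enorm_integral_le_lintegral_enorm _).trans (conv_le hA hR h0 hN _)

lemma conv_le2 {A : G → ℝ} (hA : Integrable A ρG) {R : Set G} (hR : MeasurableSet R)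
    (h0 : ∀ x ∉ R, A x = 0) (hN : eLpNorm A ⊤ ρG ≤ (ρG R)⁻¹) (hz : ∫ w, A w ∂ρG = 0)
    {x : G} (hx : 0 < x.2.2) (t : ℝ) (c : G) :
    ENNReal.ofReal |convHeat A t x| ≤ ∫⁻ w in R, (ρG R)⁻¹ * ‖kk t x w - kk t x c‖ₑ ∂ρG := by
  rw [conv_eq hA.1 hx]
  by_cases hi : Integrable (fun w => A w * kk t x w) ρG
  · have : ∫ w, A w * kk t x w ∂ρG = ∫ w, A w * (kk t x w - kk t x c) ∂ρG := by
      simp_rw [mul_sub]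
      rw [integral_sub hi (hA.mul_const _), integral_mul_const, hz]; simp
    rw [this, ← Real.norm_eq_abs, ofReal_norm]
    exact (enorm_integral_le_lintegral_enorm _).trans (conv_le hA.1 hR h0 hN _)
  · rw [integral_undef hi]; simp

lemma kk_total {x : G} (hx : 0 < x.2.2) {t : ℝ} (ht : 0 < t) :
    ∫⁻ w, ENNReal.ofReal (kk t x w) ∂ρG ≤ ENNReal.ofReal N0 * ENNReal.ofReal (2 * π * C3) := by
  have hne : ∀ᵐ w ∂ρG, w ≠ x := by
    have : ρG ≪ (volume : Measure G) := withDensity_absolutelyContinuous _ _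
    have hv : ∀ᵐ w ∂(volume : Measure G), w ≠ x := by
      rw [ae_iff]
      have h1 : {a : G | ¬ a ≠ x} = ({x.1} : Set ℝ) ×ˢ ({x.2} : Set (ℝ × ℝ)) := by
        ext a
        simp [Prod.ext_iff]
      rw [h1]
      change ((volume : Measure ℝ).prod (volume : Measure (ℝ × ℝ))) _ = 0
      rw [Measure.prod_prod]
      simp
    exact this.ae_le hv
  calc _ ≤ ∫⁻ w, ENNReal.ofReal N0 * Ker (Hheat t) w x ∂ρG := by
        apply lintegral_mono_ae
        filter_upwards [hne, rho_pos] with w hw hwp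
        have hd0 : hd x w ≠ 0 := fun h => hw (hd_eq_zero hx hwp h)
        refine (kk_heat ht hx hwp hd0).trans (le_of_eq ?_)
        unfold Ker Hheat
        rw [hd_comm, Ee_comm]
    _ = ENNReal.ofReal N0 * ∫⁻ w, Ker (Hheat t) w x ∂ρG :=
        lintegral_const_mul' _ _ ENNReal.ofReal_ne_top
    _ ≤ _ := mul_le_mul_right (Ker_heat ht x hx) _

lemma enorm_kk {t : ℝ} (ht : 0 < t) {x w : G} (hx : 0 < x.2.2) (hw : 0 < w.2.2) :
    ‖kk t x w‖ₑ = ENNReal.ofReal (kk t x w) := by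
  rw [← ofReal_norm, Real.norm_eq_abs, abs_of_nonneg (kk_nonneg ht hx hw)]

def TT : ℝ≥0∞ := ENNReal.ofReal N0 * ENNReal.ofReal (2 * π * C3) * 8
  + ENNReal.ofReal (33 * N0) * ENNReal.ofReal (16 * π * (KK + 17 + 4 * E8))
  + (ENNReal.ofReal (226 * N0) * ENNReal.ofReal (16 * π * (2 * E8))
  + ENNReal.ofReal (226 * N0) * ENNReal.ofReal (16 * π * (2 * E8))
  + ENNReal.ofReal (226 * N0) * ENNReal.ofReal (16 * π * 9)
  + ENNReal.ofReal (226 * N0) * ENNReal.ofReal (16 * π * 9))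

lemma TT_ne_top : TT ≠ ⊤ := by
  unfold TT
  finiteness

lemma main_box {A : G → ℝ} (hA : Integrable A ρG) {c : G} {L r : ℝ} (h : CZc c L r)
    (h0 : ∀ x ∉ bx c L r, A x = 0) (hN : eLpNorm A ⊤ ρG ≤ (ρG (bx c L r))⁻¹)
    (hz : ∫ w, A w ∂ρG = 0) : ∫⁻ x, maxHeat A x ∂ρG ≤ TT := by
  obtain ⟨hc, hL, hr, -⟩ := id h
  set R := bx c L r with hRd
  have hR : MeasurableSet R := measurableSet_bx c L r
  have hRs : MeasurableSet (bx c (2 * L) (2 * r)) := measurableSet_bx c _ _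
  have hρ : ρG R = ENNReal.ofReal (2 * r * L ^ 2) := rho_bx h
  have hρ0 : ρG R ≠ 0 := by
    rw [hρ]; simp only [ne_eq, ENNReal.ofReal_eq_zero, not_le]; positivity
  have hρt : ρG R ≠ ⊤ := by rw [hρ]; exact ENNReal.ofReal_ne_top
  set N := (ρG R)⁻¹ with hNd
  have hNt : N ≠ ⊤ := ENNReal.inv_ne_top.2 hρ0
  set S := (KK + 17 + 4 * E8) * r with hS
  set ν0 := ρG.restrict R with hν0
  set I1 := volume.restrict (Icc (-r) (8 * r)) with hI1
  set I2 := volume.restrict (Icc (-(E8 * r)) (E8 * r)) with hI2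
  set J0 : G → ℝ≥0∞ := fun x => ∫⁻ y, Ker (Hmid (r / 4) S) x (id y) ∂ν0 with hJ0
  set J1 : G → ℝ≥0∞ := fun x => ∫⁻ y, Ker (Hgrad r) x (P1f c r y) ∂(ν0.prod I1) with hJ1
  set J2 : G → ℝ≥0∞ := fun x => ∫⁻ y, Ker (Hgrad r) x (P2f c r y) ∂(ν0.prod I2) with hJ2
  set J3 : G → ℝ≥0∞ := fun x => ∫⁻ y, Ker (Hgrad r) x (P3f c r y) ∂(ν0.prod I2) with hJ3
  set J4 : G → ℝ≥0∞ := fun x => ∫⁻ y, Ker (Hgrad r) x (P4f c r y) ∂(ν0.prod I1) with hJ4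
  have mJ0 : Measurable J0 := meas_J (measurable_Hmid _ _) ν0 measurable_id
  have mJ1 : Measurable J1 := meas_J (measurable_Hgrad _) _ (mP1 c r)
  have mJ2 : Measurable J2 := meas_J (measurable_Hgrad _) _ (mP2 c r)
  have mJ3 : Measurable J3 := meas_J (measurable_Hgrad _) _ (mP3 c r)
  have mJ4 : Measurable J4 := meas_J (measurable_Hgrad _) _ (mP4 c r)
  have b0 : ∫⁻ x, J0 x ∂ρG ≤ ENNReal.ofReal (16 * π * (KK + 17 + 4 * E8)) * ρG R := by
    refine (schur (measurable_Hmid _ _) (fun p hp => Ker_mid (by positivity) p hp) ν0 measurable_id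
      ?_).trans (le_of_eq ?_)
    · exact ae_restrict_of_ae rho_pos
    · rw [hν0, Measure.restrict_apply_univ, hS]
      congr 2
      field_simp; norm_num; ring
  have b1 : ∫⁻ x, J1 x ∂ρG ≤ ENNReal.ofReal (16 * π * 9) * ρG R :=
    schur_path hr (by ring) R (mP1 c r) (fun y => by unfold P1f; dsimp only; positivity)
  have b2 : ∫⁻ x, J2 x ∂ρG ≤ ENNReal.ofReal (16 * π * (2 * E8)) * ρG R :=
    schur_path hr (by ring) R (mP2 c r) (fun y => by unfold P2f; dsimp only; positivity)
  have b3 : ∫⁻ x, J3 x ∂ρG ≤ ENNReal.ofReal (16 * π * (2 * E8)) * ρG R :=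
    schur_path hr (by ring) R (mP3 c r) (fun y => by unfold P3f; dsimp only; positivity)
  have b4 : ∫⁻ x, J4 x ∂ρG ≤ ENNReal.ofReal (16 * π * 9) * ρG R :=
    schur_path hr (by ring) R (mP4 c r) (fun y => by unfold P4f; dsimp only; positivity)
  set C := ENNReal.ofReal N0 * ENNReal.ofReal (2 * π * C3) with hC
  set D := ENNReal.ofReal (226 * N0) with hD
  set Q : G → ℝ≥0∞ := (bx c (2 * L) (2 * r)).indicator (fun _ => C) with hQ
  have mQ : Measurable Q := measurable_const.indicator hRs
  have bQ : ∫⁻ x, Q x ∂ρG ≤ C * 8 * ρG R := by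
    rw [hQ, lintegral_indicator_const hRs, rho_bx2 h, ← mul_assoc]
  have hpt : ∀ᵐ x ∂ρG, maxHeat A x ≤ N * (Q x + ENNReal.ofReal (33 * N0) * J0 x +
      (D * J2 x + D * J3 x + D * J1 x + D * J4 x)) := by
    filter_upwards [rho_pos] with x hx
    unfold maxHeat
    refine iSup₂_le fun t ht => ?_
    by_cases hxR : x ∈ bx c (2 * L) (2 * r)
    · calc _ ≤ ∫⁻ w in R, N * ‖kk t x w‖ₑ ∂ρG := conv_le1 hA.1 hR h0 hN hx t
        _ = N * ∫⁻ w in R, ‖kk t x w‖ₑ ∂ρG := lintegral_const_mul' _ _ hNt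
        _ ≤ N * ∫⁻ w, ENNReal.ofReal (kk t x w) ∂ρG := by
            refine mul_le_mul_right ?_ _
            refine (setLIntegral_le_lintegral _ _).trans ?_
            apply lintegral_mono_ae
            filter_upwards [rho_pos] with w hw
            rw [enorm_kk ht hx hw]
        _ ≤ N * C := by gcongr; exact kk_total hx ht
        _ = N * Q x := by rw [hQ, indicator_of_mem hxR]
        _ ≤ _ := by refine mul_le_mul_right ?_ _; rw [add_assoc]; exact le_self_add
    · by_cases hxc : hd x c ≤ KK * r
      · calc _ ≤ ∫⁻ w in R, N * ‖kk t x w‖ₑ ∂ρG := conv_le1 hA.1 hR h0 hN hx t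
          _ = N * ∫⁻ w in R, ‖kk t x w‖ₑ ∂ρG := lintegral_const_mul' _ _ hNt
          _ ≤ N * ∫⁻ w in R, ENNReal.ofReal (33 * N0) * Ker (Hmid (r / 4) S) x w ∂ρG := by
              refine mul_le_mul_right ?_ _
              apply setLIntegral_mono' hR
              intro w hw
              rw [enorm_kk ht hx (bx_pos h hw)]
              exact kk_mid ht (by positivity) hx (bx_pos h hw) (sep h hx hw hxR)
                (hd_upper h hx hw hxc)
          _ = N * (ENNReal.ofReal (33 * N0) * J0 x) := by
              rw [lintegral_const_mul' _ _ ENNReal.ofReal_ne_top]; rfl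
          _ ≤ _ := by refine mul_le_mul_right ?_ _; refine le_trans ?_ le_self_add; exact le_add_self
      · have hxc : KK * r ≤ hd x c := le_of_not_ge hxc
        have mk : ∀ {P : G × ℝ → G}, Measurable P →
            Measurable fun y : G × ℝ => Ker (Hgrad r) x (P y) := fun hP =>
          measurable_Ker (measurable_Hgrad r) measurable_const hP
        have hfub : ∀ {P : G × ℝ → G} (_ : Measurable P) (ν : Measure ℝ) [SFinite ν],
            (Measurable fun w => D * ∫⁻ z, Ker (Hgrad r) x (P (w, z)) ∂ν) ∧
            ∫⁻ w in R, D * ∫⁻ z, Ker (Hgrad r) x (P (w, z)) ∂ν ∂ρG =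
              D * ∫⁻ y, Ker (Hgrad r) x (P y) ∂(ν0.prod ν) := by
          intro P hP ν _
          refine ⟨(mk hP).lintegral_prod_right'.const_mul _, ?_⟩
          rw [lintegral_const_mul' _ _ ENNReal.ofReal_ne_top, lintegral_prod _ (mk hP).aemeasurable]
        calc _ ≤ ∫⁻ w in R, N * ‖kk t x w - kk t x c‖ₑ ∂ρG := conv_le2 hA hR h0 hN hz hx t c
          _ = N * ∫⁻ w in R, ‖kk t x w - kk t x c‖ₑ ∂ρG := lintegral_const_mul' _ _ hNt
          _ ≤ N * ∫⁻ w in R, (D * (∫⁻ z, Ker (Hgrad r) x (P2f c r (w, z)) ∂I2)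
              + D * (∫⁻ z, Ker (Hgrad r) x (P3f c r (w, z)) ∂I2)
              + D * (∫⁻ z, Ker (Hgrad r) x (P1f c r (w, z)) ∂I1)
              + D * (∫⁻ z, Ker (Hgrad r) x (P4f c r (w, z)) ∂I1)) ∂ρG := by
              refine mul_le_mul_right ?_ _
              apply setLIntegral_mono' hR
              intro w hw
              exact far h hx hw hxc ht
          _ = N * (D * J2 x + D * J3 x + D * J1 x + D * J4 x) := by
              rw [lintegral_add_right _ (hfub (mP4 c r) I1).1,
                lintegral_add_right _ (hfub (mP1 c r) I1).1,
                lintegral_add_right _ (hfub (mP3 c r) I2).1,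
                (hfub (mP1 c r) I1).2, (hfub (mP2 c r) I2).2, (hfub (mP3 c r) I2).2,
                (hfub (mP4 c r) I1).2]
          _ ≤ _ := by refine mul_le_mul_right ?_ _; exact le_add_self
  refine (lintegral_mono_ae hpt).trans ?_
  rw [lintegral_const_mul' _ _ hNt]
  have hsum : ∫⁻ x, (Q x + ENNReal.ofReal (33 * N0) * J0 x +
      (D * J2 x + D * J3 x + D * J1 x + D * J4 x)) ∂ρG ≤ TT * ρG R := by
    rw [lintegral_add_left (by fun_prop), lintegral_add_left mQ, lintegral_add_left (by fun_prop),
      lintegral_add_left (by fun_prop), lintegral_add_left (by fun_prop),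
      lintegral_const_mul' _ _ ENNReal.ofReal_ne_top,
      lintegral_const_mul' _ _ ENNReal.ofReal_ne_top,
      lintegral_const_mul' _ _ ENNReal.ofReal_ne_top,
      lintegral_const_mul' _ _ ENNReal.ofReal_ne_top,
      lintegral_const_mul' _ _ ENNReal.ofReal_ne_top]
    calc _ ≤ C * 8 * ρG R + ENNReal.ofReal (33 * N0) *
            (ENNReal.ofReal (16 * π * (KK + 17 + 4 * E8)) * ρG R) +
          (D * (ENNReal.ofReal (16 * π * (2 * E8)) * ρG R) +
           D * (ENNReal.ofReal (16 * π * (2 * E8)) * ρG R) +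
           D * (ENNReal.ofReal (16 * π * 9) * ρG R) + D * (ENNReal.ofReal (16 * π * 9) * ρG R)) := by
          gcongr
      _ = _ := by
          unfold TT
          simp only [add_mul, mul_assoc, hC, hD]
  calc _ ≤ N * (TT * ρG R) := by gcongr
    _ = TT * (ρG R * N) := by ring
    _ = TT := by rw [hNd, ENNReal.mul_inv_cancel hρ0 hρt, mul_one]

theorem maxHeat_uniform_on_atoms :
    ∃ κ > (0 : ℝ), ∀ A : G → ℝ, IsAtomG A →
      ∫⁻ x, maxHeat A x ∂ρG ≤ ENNReal.ofReal κ := by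
  refine ⟨TT.toReal + 1, by positivity, ?_⟩
  rintro A ⟨hA, R, ⟨c, L, r, hc, hL, hr, rfl, h1, h2⟩, h0, hN, hz⟩
  refine (main_box hA (c := c) (L := L) (r := r) ⟨hc, hL, hr, h1, h2⟩ h0 hN hz).trans ?_
  rw [← ENNReal.ofReal_toReal TT_ne_top]
  apply ENNReal.ofReal_le_ofReal
  rw [ENNReal.toReal_ofReal ENNReal.toReal_nonneg]
  linarith
end
end

section
/- There exists a constant C > 0 such that for every L > 2, the function f_L = χ_{R_L} − χ_{R₀} satisfies ‖f_L‖_{H¹} ≥ C log L. -/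
open MeasureTheory Real Filter Set
open scoped ENNReal

noncomputable section

/-! ### Auxiliary material for the proof -/

/-- The measure `da/a` on the half line. -/
def nuG : Measure ℝ :=
  (volume : Measure ℝ).withDensity fun a => ENNReal.ofReal (if 0 < a then a⁻¹ else 0)

lemma nu_dens_meas : Measurable fun a : ℝ => ENNReal.ofReal (if 0 < a then a⁻¹ else 0) := by
  apply ENNReal.measurable_ofReal.comp
  exact Measurable.ite measurableSet_Ioi measurable_inv measurable_const

instance : SFinite nuG := by unfold nuG; infer_instance

lemma rho_eq : ρG = (volume : Measure ℝ).prod ((volume : Measure ℝ).prod nuG) := by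
  have h1 : (volume : Measure ℝ).prod nuG = ((volume : Measure ℝ).prod volume).withDensity
      (fun z => ENNReal.ofReal (if 0 < z.2 then z.2⁻¹ else 0)) := by
    unfold nuG
    rw [prod_withDensity_right nu_dens_meas]
  rw [h1, prod_withDensity_right]
  · rfl
  · exact nu_dens_meas.comp measurable_snd

lemma nu_lt_top {u v : ℝ} (hu : 0 < u) : nuG (Icc u v) < ⊤ := by
  unfold nuG
  rw [withDensity_apply _ measurableSet_Icc]
  calc ∫⁻ a in Icc u v, ENNReal.ofReal (if 0 < a then a⁻¹ else 0)
      ≤ ∫⁻ a in Icc u v, ENNReal.ofReal (u⁻¹) := by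
        apply setLIntegral_mono measurable_const
        intro a ha
        apply ENNReal.ofReal_le_ofReal
        have : 0 < a := lt_of_lt_of_le hu ha.1
        rw [if_pos this]
        exact inv_anti₀ hu ha.1
    _ < ⊤ := by
        rw [setLIntegral_const, Real.volume_Icc]
        exact ENNReal.mul_lt_top ENNReal.ofReal_lt_top ENNReal.ofReal_lt_top

lemma nu_pos {u v : ℝ} (hu : 0 < u) (huv : u < v) : 0 < nuG (Icc u v) := by
  unfold nuG
  rw [withDensity_apply _ measurableSet_Icc]
  calc 0 < ∫⁻ a in Icc u v, ENNReal.ofReal (v⁻¹) := by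
        rw [setLIntegral_const, Real.volume_Icc]
        have h1 : 0 < v⁻¹ := inv_pos.2 (hu.trans huv)
        have h2 : 0 < v - u := sub_pos.2 huv
        exact ENNReal.mul_pos (ENNReal.ofReal_pos.2 h1).ne' (ENNReal.ofReal_pos.2 h2).ne'
    _ ≤ _ := by
        apply setLIntegral_mono nu_dens_meas
        intro a ha
        apply ENNReal.ofReal_le_ofReal
        have : 0 < a := lt_of_lt_of_le hu ha.1
        rw [if_pos this]
        exact inv_anti₀ this ha.2

lemma rho_box_s10 (a b c d u v : ℝ) : ρG (Icc a b ×ˢ (Icc c d ×ˢ Icc u v)) =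
    ENNReal.ofReal (b - a) * (ENNReal.ofReal (d - c) * nuG (Icc u v)) := by
  rw [rho_eq, Measure.prod_prod, Measure.prod_prod, Real.volume_Icc, Real.volume_Icc]

lemma lint_box (F : ℝ → ℝ≥0∞) (hF : Measurable F) (a b c d u v : ℝ) :
    ∫⁻ x in Icc a b ×ˢ (Icc c d ×ˢ Icc u v), F x.1 ∂ρG =
    (∫⁻ s in Icc a b, F s) * (ENNReal.ofReal (d - c) * nuG (Icc u v)) := by
  rw [rho_eq, ← Measure.prod_restrict, lintegral_prod _ (by fun_prop)]
  simp only [lintegral_const, Measure.restrict_apply_univ, Measure.prod_prod, Real.volume_Icc]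
  rw [lintegral_mul_const _ hF]

/-- The truncated logarithm. -/
def hB (L s : ℝ) : ℝ := max 0 (min (Real.log s) (Real.log L))

lemma hB_meas (L : ℝ) : Measurable (hB L) := by
  unfold hB
  exact measurable_const.max (Real.measurable_log.min measurable_const)

lemma hB_lip (L s t : ℝ) : |hB L s - hB L t| ≤ |Real.log s - Real.log t| := by
  unfold hB
  grind

lemma hB_nonneg (L s : ℝ) : 0 ≤ hB L s := le_max_left _ _

lemma hB_le {L : ℝ} (hL : 1 ≤ L) (s : ℝ) : hB L s ≤ Real.log L :=
  max_le (Real.log_nonneg hL) (min_le_right _ _)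

lemma hB_zero {L s : ℝ} (hs : |s| ≤ 1) : hB L s = 0 := by
  have : Real.log s ≤ 0 := by
    rw [← Real.log_abs]; exact Real.log_nonpos (abs_nonneg _) hs
  unfold hB
  grind

lemma hB_eq {L s : ℝ} (hL : 1 ≤ L) (hs : L ≤ s) : hB L s = Real.log L := by
  have := Real.log_le_log (by linarith) hs
  have := Real.log_nonneg hL
  unfold hB
  grind

/-- One dimensional BMO bound. -/
lemma hB_bmo (L c l : ℝ) (hl : 0 < l) : ∃ k : ℝ,
    ∫⁻ s in Icc (c - l/2) (c + l/2), ‖hB L s - k‖ₑ ≤ ENNReal.ofReal 3 * ENNReal.ofReal l := by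
  rcases le_total l |c| with hc | hc
  · refine ⟨hB L c, ?_⟩
    calc ∫⁻ s in Icc (c - l/2) (c + l/2), ‖hB L s - hB L c‖ₑ
        ≤ ∫⁻ s in Icc (c - l/2) (c + l/2), ENNReal.ofReal 3 := by
          apply setLIntegral_mono measurable_const
          intro s hs
          rw [Real.enorm_eq_ofReal_abs]
          apply ENNReal.ofReal_le_ofReal
          refine (hB_lip L s c).trans ?_
          have hc0 : 0 < |c| := lt_of_lt_of_le hl hc
          have hd : |s - c| ≤ |c| / 2 := by
            rw [abs_le]; constructor <;> linarith [hs.1, hs.2]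
          have h1 : |c| / 2 ≤ |s| := by
            have := abs_sub_abs_le_abs_sub c s
            rw [abs_sub_comm] at this; linarith
          have h2 : |s| ≤ 2 * |c| := by
            have := abs_sub_abs_le_abs_sub s c
            linarith
          have h3 := Real.log_le_log (by linarith) h1
          have h4 := Real.log_le_log (by linarith) h2
          rw [Real.log_div hc0.ne' two_ne_zero] at h3
          rw [Real.log_mul two_ne_zero hc0.ne'] at h4
          simp only [Real.log_abs] at h3 h4
          have h5 := Real.log_two_lt_d9
          rw [abs_le]; constructor <;> linarith
      _ = _ := by
          rw [setLIntegral_const, Real.volume_Icc]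
          congr 2; ring
  · set M := 3 * l / 2 with hM
    have hM0 : 0 < M := by positivity
    refine ⟨hB L M, ?_⟩
    have hcc := abs_le.1 hc
    have hint : IntegrableOn (fun s => Real.log M - Real.log s) (Icc (-M) M) volume := by
      rw [integrableOn_Icc_iff_integrableOn_Ioc,
        ← intervalIntegrable_iff_integrableOn_Ioc_of_le (by linarith)]
      exact intervalIntegrable_const.sub intervalIntegral.intervalIntegrable_log'
    have hpt : ∀ s ∈ Icc (-M) M, s ≠ 0 → 0 ≤ Real.log M - Real.log s := by
      intro s hs h0
      have := Real.log_le_log (abs_pos.2 h0) (abs_le.2 ⟨hs.1, hs.2⟩)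
      rw [Real.log_abs] at this
      linarith
    have hne : ∀ᵐ s : ℝ ∂volume, s ≠ 0 := by
      rw [ae_iff]; simp
    calc ∫⁻ s in Icc (c - l/2) (c + l/2), ‖hB L s - hB L M‖ₑ
        ≤ ∫⁻ s in Icc (-M) M, ‖hB L s - hB L M‖ₑ := by
          apply lintegral_mono_set
          apply Icc_subset_Icc <;> linarith
      _ ≤ ∫⁻ s in Icc (-M) M, ENNReal.ofReal (Real.log M - Real.log s) := by
          apply setLIntegral_mono_ae' measurableSet_Icc
          filter_upwards [hne] with s h0 hs
          rw [Real.enorm_eq_ofReal_abs]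
          apply ENNReal.ofReal_le_ofReal
          refine (hB_lip L s M).trans ?_
          rw [abs_sub_comm, abs_of_nonneg (hpt s hs h0)]
      _ = ENNReal.ofReal (∫ s in Icc (-M) M, (Real.log M - Real.log s)) := by
          rw [ofReal_integral_eq_lintegral_ofReal hint]
          rw [EventuallyLE, ae_restrict_iff' measurableSet_Icc]
          filter_upwards [hne] with s h0 hs
          exact hpt s hs h0
      _ = ENNReal.ofReal (2 * M) := by
          congr 1
          rw [integral_Icc_eq_integral_Ioc, ← intervalIntegral.integral_of_le (by linarith),
            intervalIntegral.integral_sub intervalIntegrable_const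
              intervalIntegral.intervalIntegrable_log', integral_log]
          simp [Real.log_neg_eq_log]
          ring
      _ = _ := by
          rw [← ENNReal.ofReal_mul (by norm_num)]
          congr 1; rw [hM]; ring

lemma g_bdd_mul {L : ℝ} (hL : 1 ≤ L) {A : G → ℝ} (hA : Integrable A ρG) :
    Integrable (fun x => A x * hB L x.1) ρG := by
  refine hA.mul_bdd (c := Real.log L) ?_ ?_
  · exact ((hB_meas L).comp measurable_fst).aestronglyMeasurable
  · refine Eventually.of_forall fun x => ?_
    rw [Real.norm_eq_abs, abs_of_nonneg (hB_nonneg _ _)]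
    exact hB_le hL _

lemma atom_bound {L : ℝ} (hL : 1 ≤ L) {A : G → ℝ} (hA : IsAtomG A) :
    |∫ x, A x * hB L x.1 ∂ρG| ≤ 3 := by
  obtain ⟨hint, R, ⟨c, l, r, hc, hl, hr, hR, -, -⟩, hsupp, hsup, hmean⟩ := hA
  obtain ⟨k, hk⟩ := hB_bmo L c.1 l hl
  have e1 : ∫ x, A x * hB L x.1 ∂ρG = ∫ x, A x * (hB L x.1 - k) ∂ρG := by
    simp only [mul_sub]
    rw [integral_sub (g_bdd_mul hL hint) (hint.mul_const k), integral_mul_const, hmean]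
    simp
  have hRm : MeasurableSet R := by
    rw [hR]
    exact measurableSet_Icc.prod (measurableSet_Icc.prod measurableSet_Icc)
  have hu : 0 < c.2.2 * Real.exp (-r) := by positivity
  have huv : c.2.2 * Real.exp (-r) < c.2.2 * Real.exp r := by
    apply mul_lt_mul_of_pos_left _ hc
    apply Real.exp_lt_exp.2; linarith
  set m := nuG (Icc (c.2.2 * Real.exp (-r)) (c.2.2 * Real.exp r)) with hm
  have hm0 : m ≠ 0 := (nu_pos hu huv).ne'
  have hmt : m ≠ ⊤ := (nu_lt_top hu).ne
  have hl0 : ENNReal.ofReal l ≠ 0 := (ENNReal.ofReal_pos.2 hl).ne'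
  have hlt : ENNReal.ofReal l ≠ ⊤ := ENNReal.ofReal_ne_top
  have hρR : ρG R = ENNReal.ofReal l * (ENNReal.ofReal l * m) := by
    rw [hR, rho_box_s10, hm]; congr 3 <;> ring
  have hmeas : Measurable fun s => ‖hB L s - k‖ₑ := ((hB_meas L).sub_const k).enorm
  have hρ0 : ρG R ≠ 0 := by
    rw [hρR]; exact mul_ne_zero hl0 (mul_ne_zero hl0 hm0)
  have hρt : ρG R ≠ ⊤ := by
    rw [hρR]; exact ENNReal.mul_ne_top hlt (ENNReal.mul_ne_top hlt hmt)
  have key : ‖∫ x, A x * (hB L x.1 - k) ∂ρG‖ₑ ≤ ENNReal.ofReal 3 := by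
    calc ‖∫ x, A x * (hB L x.1 - k) ∂ρG‖ₑ
        ≤ ∫⁻ x, ‖A x * (hB L x.1 - k)‖ₑ ∂ρG := enorm_integral_le_lintegral_enorm _
      _ ≤ ∫⁻ x, R.indicator (fun x => (ρG R)⁻¹ * ‖hB L x.1 - k‖ₑ) x ∂ρG := by
          apply lintegral_mono_ae
          rw [eLpNorm_exponent_top] at hsup
          filter_upwards [enorm_ae_le_eLpNormEssSup A ρG] with x hx
          by_cases hxR : x ∈ R
          · rw [indicator_of_mem hxR, enorm_mul]
            gcongr
            exact hx.trans hsup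
          · simp [hsupp x hxR]
      _ = (ρG R)⁻¹ * ∫⁻ x in R, ‖hB L x.1 - k‖ₑ ∂ρG := by
          rw [lintegral_indicator hRm, lintegral_const_mul]
          exact hmeas.comp measurable_fst
      _ ≤ (ρG R)⁻¹ * (ENNReal.ofReal 3 * ρG R) := by
          gcongr
          rw [hρR, hR, lint_box _ hmeas, ← hm]
          have : c.2.1 + l/2 - (c.2.1 - l/2) = l := by ring
          rw [this, ← mul_assoc (ENNReal.ofReal 3)]
          gcongr
      _ = ENNReal.ofReal 3 := by
          rw [mul_comm, mul_assoc, ENNReal.mul_inv_cancel hρ0 hρt, mul_one]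
  rw [e1]
  rw [Real.enorm_eq_ofReal_abs] at key
  exact (ENNReal.ofReal_le_ofReal_iff (by norm_num)).1 key

lemma R0_meas : MeasurableSet R0set :=
  measurableSet_Icc.prod (measurableSet_Icc.prod measurableSet_Icc)

lemma RL_meas (L : ℝ) : MeasurableSet (RLset L) :=
  measurableSet_Icc.prod (measurableSet_Icc.prod measurableSet_Icc)

/-- The mass `ν([e⁻¹, e])`. -/
def m0 : ℝ≥0∞ := nuG (Icc (Real.exp (-1)) (Real.exp 1))

lemma m0_pos : 0 < m0 := nu_pos (Real.exp_pos _) (Real.exp_lt_exp.2 (by norm_num))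

lemma m0_lt : m0 < ⊤ := nu_lt_top (Real.exp_pos _)

lemma R0_rho : ρG R0set = ENNReal.ofReal 2 * (ENNReal.ofReal 2 * m0) := by
  unfold R0set m0; rw [rho_box_s10]; norm_num

lemma RL_rho (L : ℝ) : ρG (RLset L) = ENNReal.ofReal 2 * (ENNReal.ofReal 2 * m0) := by
  unfold RLset m0; rw [rho_box_s10]
  have : L + 1 - (L - 1) = 2 := by ring
  rw [this]; norm_num

lemma box_fin : ENNReal.ofReal 2 * (ENNReal.ofReal 2 * m0) ≠ ⊤ :=
  ENNReal.mul_ne_top ENNReal.ofReal_ne_top (ENNReal.mul_ne_top ENNReal.ofReal_ne_top m0_lt.ne)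

lemma ind_R0 : Integrable (R0set.indicator (fun _ => (1 : ℝ))) ρG := by
  rw [integrable_indicator_iff R0_meas]
  exact integrableOn_const (by rw [R0_rho]; exact box_fin)

lemma ind_RL (L : ℝ) : Integrable ((RLset L).indicator (fun _ => (1 : ℝ))) ρG := by
  rw [integrable_indicator_iff (RL_meas L)]
  exact integrableOn_const (by rw [RL_rho]; exact box_fin)

lemma fL_int (L : ℝ) : Integrable (fL L) ρG := (ind_RL L).sub ind_R0

lemma fL_mean (L : ℝ) : ∫ x, fL L x ∂ρG = 0 := by
  unfold fL
  rw [integral_sub (ind_RL L) ind_R0, integral_indicator (RL_meas L), integral_indicator R0_meas]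
  simp [Measure.real, R0_rho, RL_rho]

lemma fL_pair {L : ℝ} (hL : 2 < L) :
    2 * m0.toReal * Real.log L ≤ ∫ x, fL L x * hB L x.1 ∂ρG := by
  set S : Set G := Icc L (L+1) ×ˢ (Icc (-1) 1 ×ˢ Icc (Real.exp (-1)) (Real.exp 1)) with hS
  have hSm : MeasurableSet S :=
    measurableSet_Icc.prod (measurableSet_Icc.prod measurableSet_Icc)
  have hSρ : ρG S = ENNReal.ofReal 2 * m0 := by
    rw [hS, rho_box_s10, m0]
    have : L + 1 - L = 1 := by ring
    rw [this]; norm_num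
  have hI : ∫ x, S.indicator (fun _ => Real.log L) x ∂ρG = 2 * m0.toReal * Real.log L := by
    rw [integral_indicator hSm]
    simp [Measure.real, hSρ]
  rw [← hI]
  apply integral_mono
  · rw [integrable_indicator_iff hSm]
    exact integrableOn_const (by
      rw [hSρ]; exact ENNReal.mul_ne_top ENNReal.ofReal_ne_top m0_lt.ne)
  · exact g_bdd_mul (by linarith) (fL_int L)
  intro x
  have h0 := hB_nonneg L x.1
  have e1 : R0set.indicator (fun _ => (1 : ℝ)) x * hB L x.1 = 0 := by
    by_cases hx : x ∈ R0set
    · have : hB L x.1 = 0 := hB_zero (abs_le.2 ⟨hx.1.1, hx.1.2⟩)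
      rw [this, mul_zero]
    · rw [indicator_of_notMem hx, zero_mul]
  simp only [fL, sub_mul, e1, sub_zero]
  by_cases hx : x ∈ S
  · have hx2 : x ∈ RLset L := ⟨⟨by linarith [hx.1.1], hx.1.2⟩, hx.2⟩
    rw [indicator_of_mem hx, indicator_of_mem hx2, one_mul, hB_eq (by linarith) hx.1.1]
  · rw [indicator_of_notMem hx]
    exact mul_nonneg (indicator_nonneg (fun _ _ => zero_le_one) _) h0

lemma zero_atom : IsAtomG (fun _ => (0 : ℝ)) := by
  refine ⟨integrable_zero _ _ _, _, ⟨(0, 0, 1), Real.exp 2, 1, by norm_num, Real.exp_pos _,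
    by norm_num, rfl, ?_, ?_⟩, ?_, ?_, ?_⟩
  · intro h; norm_num at h
  · intro _
    norm_num
  · intro x _; rfl
  · have : eLpNorm (fun _ : G => (0:ℝ)) ⊤ ρG = 0 := eLpNorm_zero
    rw [this]; exact zero_le
  · simp

lemma fL_decomp {L : ℝ} (hL : 2 < L) : ∃ lam A, IsH1Decomp (fL L) lam A := by
  set r := L + 1 with hr
  have hr1 : 1 ≤ r := by linarith
  set R : Set G := Icc (0 - Real.exp (2*r)/2) (0 + Real.exp (2*r)/2) ×ˢ
    (Icc (0 - Real.exp (2*r)/2) (0 + Real.exp (2*r)/2) ×ˢ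
      Icc (1 * Real.exp (-r)) (1 * Real.exp r)) with hR
  have hu : 0 < 1 * Real.exp (-r) := by positivity
  have huv : 1 * Real.exp (-r) < 1 * Real.exp r := by
    simp only [one_mul]; apply Real.exp_lt_exp.2; linarith
  have hl : 0 < Real.exp (2*r) := Real.exp_pos _
  have hρ : ρG R = ENNReal.ofReal (Real.exp (2*r)) * (ENNReal.ofReal (Real.exp (2*r)) *
      nuG (Icc (1 * Real.exp (-r)) (1 * Real.exp r))) := by
    rw [hR, rho_box_s10]; congr 3 <;> ring
  have hρ0 : ρG R ≠ 0 := by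
    rw [hρ]
    have := (ENNReal.ofReal_pos.2 hl).ne'
    exact mul_ne_zero this (mul_ne_zero this (nu_pos hu huv).ne')
  have hρt : ρG R ≠ ⊤ := by
    rw [hρ]
    exact ENNReal.mul_ne_top ENNReal.ofReal_ne_top
      (ENNReal.mul_ne_top ENNReal.ofReal_ne_top (nu_lt_top hu).ne)
  have hpos : 0 < (ρG R).toReal := ENNReal.toReal_pos hρ0 hρt
  have hbig : 2 * r + 1 ≤ Real.exp (2*r) := Real.add_one_le_exp _
  have hzI : ∀ a, a ∈ Icc (Real.exp (-1)) (Real.exp 1) →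
      a ∈ Icc (1 * Real.exp (-r)) (1 * Real.exp r) := by
    intro a ha
    have h1 : Real.exp (-r) ≤ Real.exp (-1) := Real.exp_le_exp.2 (by linarith)
    have h2 : Real.exp 1 ≤ Real.exp r := Real.exp_le_exp.2 (by linarith)
    constructor <;> linarith [ha.1, ha.2]
  have hsub0 : R0set ⊆ R := by
    rintro x ⟨h1, h2, h3⟩
    refine ⟨⟨?_, ?_⟩, ⟨?_, ?_⟩, hzI _ h3⟩ <;> linarith [h1.1, h1.2, h2.1, h2.2]
  have hsubL : RLset L ⊆ R := by
    rintro x ⟨h1, h2, h3⟩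
    refine ⟨⟨?_, ?_⟩, ⟨?_, ?_⟩, hzI _ h3⟩ <;> linarith [h1.1, h1.2, h2.1, h2.2]
  have hf1 : ∀ x, |fL L x| ≤ 1 := by
    intro x
    unfold fL
    by_cases h1 : x ∈ RLset L <;> by_cases h2 : x ∈ R0set <;> simp [h1, h2]
  have hf0 : ∀ x ∉ R, fL L x = 0 := by
    intro x hx
    unfold fL
    rw [indicator_of_notMem (fun h => hx (hsubL h)), indicator_of_notMem (fun h => hx (hsub0 h))]
    simp
  have hatom : IsAtomG (fun x => (ρG R).toReal⁻¹ * fL L x) := by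
    refine ⟨(fL_int L).const_mul _, R, ⟨(0, 0, 1), Real.exp (2*r), r, by norm_num, hl,
      by linarith, hR, ?_, ?_⟩, ?_, ?_, ?_⟩
    · intro h; linarith
    · intro _
      simp only [one_mul]
      exact ⟨le_rfl, Real.exp_lt_exp.2 (by linarith)⟩
    · intro x hx; simp [hf0 x hx]
    · have h1 : (ρG R)⁻¹ = ENNReal.ofReal ((ρG R).toReal⁻¹) := by
        rw [← ENNReal.toReal_inv, ENNReal.ofReal_toReal (ENNReal.inv_ne_top.2 hρ0)]
      rw [h1, eLpNorm_exponent_top]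
      apply eLpNormEssSup_le_of_ae_bound
      refine Eventually.of_forall fun x => ?_
      rw [norm_mul, Real.norm_eq_abs, Real.norm_eq_abs, abs_of_pos (inv_pos.2 hpos)]
      exact mul_le_of_le_one_right (inv_pos.2 hpos).le (hf1 x)
    · rw [integral_const_mul, fL_mean, mul_zero]
  refine ⟨fun j => if j = 0 then (ρG R).toReal else 0,
    fun j => if j = 0 then (fun x => (ρG R).toReal⁻¹ * fL L x) else fun _ => 0, ?_, ?_, ?_⟩
  · intro j
    by_cases hj : j = 0
    · simp only [hj, if_true]; exact hatom
    · simp only [hj, if_false]; exact zero_atom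
  · apply summable_of_ne_finset_zero (s := {0})
    intro j hj
    have : j ≠ 0 := by simpa using hj
    simp [this]
  · apply tendsto_const_nhds.congr'
    filter_upwards [eventually_ge_atTop 1] with N hN
    have : (fun x => fL L x - ∑ j ∈ Finset.range N, (if j = 0 then (ρG R).toReal else 0) *
        (if j = 0 then (fun x => (ρG R).toReal⁻¹ * fL L x) else fun _ => (0:ℝ)) x) =
        (fun _ => 0) := by
      funext x
      rw [Finset.sum_eq_single 0]
      · simp only [if_true]
        rw [mul_inv_cancel_left₀ hpos.ne', sub_self]
      · intro j _ hj; simp [hj]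
      · intro h; exfalso; apply h; simp; omega
    rw [this]
    exact eLpNorm_zero.symm

lemma decomp_lower {L : ℝ} (hL : 2 < L) {lam : ℕ → ℝ} {A : ℕ → G → ℝ}
    (h : IsH1Decomp (fL L) lam A) :
    2 * m0.toReal * Real.log L ≤ 3 * ∑' j, |lam j| := by
  obtain ⟨hA, hs, hlim⟩ := h
  have hL1 : 1 ≤ L := by linarith
  refine (fL_pair hL).trans ?_
  set g : G → ℝ := fun x => hB L x.1 with hg
  set D : ℕ → G → ℝ := fun N x => fL L x - ∑ j ∈ Finset.range N, lam j * A j x with hD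
  have hsumI : ∀ N, Integrable (fun x => ∑ j ∈ Finset.range N, lam j * A j x) ρG := fun N =>
    integrable_finsetSum _ fun j _ => (hA j).1.const_mul _
  have hDI : ∀ N, Integrable (D N) ρG := fun N => (fL_int L).sub (hsumI N)
  have hstep : ∀ N, ∫ x, fL L x * hB L x.1 ∂ρG ≤
      3 * ∑' j, |lam j| + Real.log L * (eLpNorm (D N) 1 ρG).toReal := by
    intro N
    have e1 : ∫ x, fL L x * hB L x.1 ∂ρG =
        (∑ j ∈ Finset.range N, lam j * ∫ x, A j x * hB L x.1 ∂ρG) +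
          ∫ x, D N x * hB L x.1 ∂ρG := by
      have : ∀ j, lam j * ∫ x, A j x * hB L x.1 ∂ρG = ∫ x, lam j * (A j x * hB L x.1) ∂ρG :=
        fun j => (integral_const_mul _ _).symm
      simp only [this]
      rw [← integral_finsetSum _ fun j _ => (g_bdd_mul hL1 (hA j).1).const_mul _,
        ← integral_add (integrable_finsetSum _ fun j _ => (g_bdd_mul hL1 (hA j).1).const_mul _)
          (g_bdd_mul hL1 (hDI N))]
      congr 1
      funext x
      simp only [hD, sub_mul, Finset.sum_mul, mul_assoc]
      ring
    have b1 : ∑ j ∈ Finset.range N, lam j * ∫ x, A j x * hB L x.1 ∂ρG ≤ 3 * ∑' j, |lam j| := by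
      calc ∑ j ∈ Finset.range N, lam j * ∫ x, A j x * hB L x.1 ∂ρG
          ≤ ∑ j ∈ Finset.range N, 3 * |lam j| := by
            apply Finset.sum_le_sum
            intro j _
            refine (le_abs_self _).trans ?_
            rw [abs_mul, mul_comm]
            exact mul_le_mul_of_nonneg_right (atom_bound hL1 (hA j)) (abs_nonneg _)
        _ = 3 * ∑ j ∈ Finset.range N, |lam j| := by rw [Finset.mul_sum]
        _ ≤ _ := by
            have := hs.sum_le_tsum (Finset.range N) (fun j _ => abs_nonneg (lam j))
            linarith
    have b2 : ∫ x, D N x * hB L x.1 ∂ρG ≤ Real.log L * (eLpNorm (D N) 1 ρG).toReal := by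
      have : (eLpNorm (D N) 1 ρG).toReal = ∫ x, ‖D N x‖ ∂ρG := by
        rw [eLpNorm_one_eq_lintegral_enorm, integral_norm_eq_lintegral_enorm (hDI N).1]
      rw [this, ← integral_const_mul]
      apply integral_mono (g_bdd_mul hL1 (hDI N)) ((hDI N).norm.const_mul _)
      intro x
      have h1 : D N x * hB L x.1 ≤ |D N x| * hB L x.1 :=
        mul_le_mul_of_nonneg_right (le_abs_self _) (hB_nonneg _ _)
      have h2 : |D N x| * hB L x.1 ≤ |D N x| * Real.log L :=
        mul_le_mul_of_nonneg_left (hB_le hL1 _) (abs_nonneg _)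
      simp only [Real.norm_eq_abs]
      linarith
    linarith
  have ht : Tendsto (fun N => 3 * ∑' j, |lam j| + Real.log L * (eLpNorm (D N) 1 ρG).toReal)
      atTop (nhds (3 * ∑' j, |lam j| + Real.log L * 0)) := by
    have := (ENNReal.tendsto_toReal ENNReal.zero_ne_top).comp hlim
    exact tendsto_const_nhds.add (tendsto_const_nhds.mul this)
  have := ge_of_tendsto' ht hstep
  linarith

theorem fL_H1norm_lower :
    ∃ C > (0 : ℝ), ∀ L : ℝ, 2 < L → C * Real.log L ≤ H1norm (fL L) := by
  have hm : 0 < m0.toReal := ENNReal.toReal_pos m0_pos.ne' m0_lt.ne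
  refine ⟨2 * m0.toReal / 3, by positivity, ?_⟩
  intro L hL
  unfold H1norm
  apply le_csInf
  · obtain ⟨lam, A, h⟩ := fL_decomp hL
    exact ⟨_, lam, A, h, rfl⟩
  · rintro s ⟨lam, A, h, rfl⟩
    have := decomp_lower hL h
    linarith
end
end
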